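/- arXiv:1010.0035 — 4 statements merged into one kernel-verified Lean document; each statement's English description precedes it below -/
import Mathlib

section
/- For every real λ, the characteristic function φ_m(λ) = Σ_{n∈Ω_m} π_m(n)·e^{iλ·ln n/ln p_m} = ∏_{j=1}^m ( p_j/(1+p_j) + e^{iλ·ln p_j/ln p_m}/(1+p_j) ) converges, as m→∞, to φ(λ) = exp( ∫_0^1 (e^{iλv}−1)/v dv ), where the integrand is extended continuously by the value iλ at v=0. Consequently the distributions of ζ_m = (1/ln p_m)·Σ_{j=1}^m ν_j·ln p_j under Π_m converge weakly to the infinitely divisible law with characteristic function φ. -/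
open Filter MeasureTheory
open scoped Topology

noncomputable section

/-- The `j`-th prime number, `0`-indexed: `nthPrime 0 = 2`, `nthPrime 1 = 3`, … -/
def nthPrime (j : ℕ) : ℕ := Nat.nth Nat.Prime j

/-- The partition function `Z_m = ∏_{j=1}^m (1 + 1/p_j)`. -/
def Zm (m : ℕ) : ℝ := ∏ j ∈ Finset.range m, (1 + 1 / (nthPrime j : ℝ))

/-- The mass `π_m(n) = 1/(Z_m n)` of `n = ∏ p_j^{ν_j}`, parametrized by `ν ∈ {0,1}^m`. -/
def mass (m : ℕ) (ν : Fin m → Bool) : ℝ :=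
  (1 / Zm m) * ∏ j : Fin m, (if ν j then (nthPrime j : ℝ) else 1)⁻¹

/-- `ζ_m = (1/ln p_m) ∑_{j=1}^m ν_j ln p_j`. -/
def zetam (m : ℕ) (ν : Fin m → Bool) : ℝ :=
  (1 / Real.log (nthPrime (m - 1))) * ∑ j : Fin m, (if ν j then Real.log (nthPrime j) else 0)

/-- The law of `ζ_m` under `Π_m`, as a measure on `ℝ`. -/
def lawZeta (m : ℕ) : Measure ℝ :=
  ∑ ν : Fin m → Bool, ENNReal.ofReal (mass m ν) • Measure.dirac (zetam m ν)

/-- `φ(λ) = exp(∫_0^1 (e^{iλv}-1)/v dv)`, the integrand extended continuously by `iλ` at `v=0`. -/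
def phi (lam : ℝ) : ℂ :=
  Complex.exp (∫ v in (0:ℝ)..1,
    if v = 0 then Complex.I * lam else (Complex.exp (Complex.I * lam * v) - 1) / v)


lemma ax_log_le {p : ℕ} : Real.log p ≤ 4 * (p:ℝ) ^ (1/4 : ℝ) := by
  have := Real.log_le_rpow_div (x := (p:ℝ)) (by positivity) (ε := 1/4) (by norm_num)
  linarith

lemma ax_sq_le {p : ℕ} (hp : 2 ≤ p) : (Real.log p)^2 / (p:ℝ)^2 ≤ 16 * (p:ℝ) ^ (-(3/2) : ℝ) := by
  have h0 : (0:ℝ) < p := by positivity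
  have h1 := ax_log_le (p := p)
  have h2 : 0 ≤ Real.log p := Real.log_natCast_nonneg p
  have h3 : (Real.log p)^2 ≤ 16 * (p:ℝ)^(1/2:ℝ) := by
    calc (Real.log p)^2 ≤ (4 * (p:ℝ) ^ (1/4 : ℝ))^2 := by gcongr
      _ = 16 * ((p:ℝ) ^ (1/4 : ℝ))^2 := by ring
      _ = _ := by rw [← Real.rpow_natCast, ← Real.rpow_mul h0.le]; norm_num
  rw [div_le_iff₀ (by positivity), mul_assoc, ← Real.rpow_natCast (p:ℝ) 2, ← Real.rpow_add h0]
  norm_num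
  norm_num at h3
  exact h3

lemma ax_half_le_log {p : ℕ} (hp : 2 ≤ p) : 1 / 2 ≤ Real.log p := by
  have : Real.log 2 ≤ Real.log p := Real.log_le_log (by norm_num) (by exact_mod_cast hp)
  have := Real.log_two_gt_d9
  linarith

/-- Uniform bound for the convergent prime sums. -/
lemma ax_bound : ∃ D : ℝ, 0 ≤ D ∧ ∀ N : ℕ,
    ∑ p ∈ Nat.primesLE N, (Real.log p)^2 / (p:ℝ)^2 ≤ D := by
  have hs : Summable (fun p : ℕ => 16 * (p:ℝ) ^ (-(3/2) : ℝ)) :=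
    (Real.summable_nat_rpow.2 (by norm_num)).mul_left _
  refine ⟨∑' p : ℕ, 16 * (p:ℝ) ^ (-(3/2) : ℝ), tsum_nonneg fun _ => by positivity, fun N => ?_⟩
  refine le_trans (Finset.sum_le_sum fun p hp => ax_sq_le (Nat.two_le_of_mem_primesLE hp)) ?_
  exact hs.sum_le_tsum _ fun _ _ => by positivity

lemma ax_log_fact (N : ℕ) : Real.log (N.factorial) =
    ∑ p ∈ Nat.primesLE N, (N.factorial.factorization p : ℝ) * Real.log p := by
  have h1 : N.factorial.primeFactors = Nat.primesLE N := by
    ext p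
    rw [Nat.mem_primesLE, Nat.mem_primeFactors]
    constructor
    · rintro ⟨h, h', -⟩; exact ⟨(h.dvd_factorial).1 h', h⟩
    · rintro ⟨h, h'⟩; exact ⟨h', (h'.dvd_factorial).2 h, N.factorial_ne_zero⟩
  conv_lhs => rw [← Nat.prod_factorization_pow_eq_self N.factorial_ne_zero]
  rw [Finsupp.prod, Nat.support_factorization, h1, Nat.cast_prod, Real.log_prod]
  · simp [Real.log_pow]
  · intro p hp
    have := (Nat.prime_of_mem_primesLE hp).pos
    positivity

lemma ax_fact_lower {N p : ℕ} (hp : p.Prime) :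
    (N:ℝ)/p - 1 ≤ (N.factorial.factorization p : ℝ) := by
  have h : N / p ≤ N.factorial.factorization p := by
    have h2 := Nat.factorization_factorial_mul (n := N / p) hp
    have h3 : (p * (N/p)).factorial.factorization p ≤ N.factorial.factorization p :=
      (Nat.factorization_le_iff_dvd (Nat.factorial_ne_zero _) (Nat.factorial_ne_zero _)).2
        (Nat.factorial_dvd_factorial (Nat.mul_div_le N p)) p
    omega
  have h4 : (N:ℝ)/p < (N/p : ℕ) + 1 := by
    rw [← Nat.floor_div_eq_div (K := ℝ)]; exact Nat.lt_floor_add_one _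
  have : ((N/p : ℕ):ℝ) ≤ (N.factorial.factorization p : ℝ) := by exact_mod_cast h
  linarith

lemma ax_fact_upper {N p : ℕ} (hp : p.Prime) :
    (N.factorial.factorization p : ℝ) ≤ N / p + N * (2 / (p:ℝ)^2) := by
  have h := Nat.factorization_factorial_le_div_pred hp N
  have h1 : (N.factorial.factorization p : ℝ) ≤ ((N / (p-1) : ℕ) : ℝ) := by exact_mod_cast h
  have h2 : ((N / (p-1) : ℕ) : ℝ) ≤ (N:ℝ) / ((p - 1 : ℕ):ℝ) := Nat.cast_div_le
  rw [Nat.cast_sub hp.one_le] at h2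
  have h3 : (2:ℝ) ≤ p := by exact_mod_cast hp.two_le
  have h4 : 1 / ((p:ℝ) - 1) ≤ 1/p + 2/(p:ℝ)^2 := by
    rw [div_add_div _ _ (by positivity) (by positivity), div_le_div_iff₀ (by linarith) (by positivity)]
    nlinarith
  calc _ ≤ (N:ℝ) * (1 / ((p:ℝ) - 1)) := by
        rw [mul_one_div]; simpa using h1.trans h2
    _ ≤ N * (1/p + 2/(p:ℝ)^2) := by gcongr
    _ = _ := by ring

lemma ax_mertens : ∃ C : ℝ, 0 ≤ C ∧ ∀ N : ℕ,
    |∑ p ∈ Nat.primesLE N, Real.log p / p - Real.log N| ≤ C := by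
  obtain ⟨D, hD, hb⟩ := ax_bound
  refine ⟨4 * D + 2, by positivity, fun N => ?_⟩
  rcases Nat.eq_zero_or_pos N with rfl | hN
  · simp; positivity
  have hN' : (0:ℝ) < N := by exact_mod_cast hN
  have hlf := ax_log_fact N
  rw [abs_le]
  constructor
  · have h1 : Real.log N.factorial ≤ N * (∑ p ∈ Nat.primesLE N, Real.log p / p) + N * (4 * D) := by
      rw [hlf]
      calc _ ≤ ∑ p ∈ Nat.primesLE N, (N * (Real.log p / p) + N * 4 * ((Real.log p)^2 / (p:ℝ)^2)) := by
            refine Finset.sum_le_sum fun p hp => ?_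
            have hp' := Nat.prime_of_mem_primesLE hp
            have hl := ax_half_le_log hp'.two_le
            have hp0 : (0:ℝ) < p := by exact_mod_cast hp'.pos
            calc _ ≤ (N / p + N * (2 / (p:ℝ)^2)) * Real.log p :=
                  mul_le_mul_of_nonneg_right (ax_fact_upper hp') (by linarith)
              _ = N * (Real.log p / p) + N * 4 * ((1/2) * Real.log p / (p:ℝ)^2) := by ring
              _ ≤ N * (Real.log p / p) + N * 4 * ((Real.log p)^2 / (p:ℝ)^2) := by
                  gcongr; nlinarith
        _ ≤ _ := by
            rw [Finset.sum_add_distrib, ← Finset.mul_sum, ← Finset.mul_sum, mul_assoc]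
            gcongr
            exact hb N
    have h2 := Stirling.le_log_factorial_stirling hN.ne'
    have h3 : 0 ≤ Real.log N := Real.log_natCast_nonneg N
    have h4 : 0 ≤ Real.log (2 * Real.pi) := Real.log_nonneg (by nlinarith [Real.pi_gt_three])
    have h5 : (N:ℝ) * (Real.log N - 1) ≤ N * (∑ p ∈ Nat.primesLE N, Real.log p / p + 4 * D) := by
      nlinarith
    have := le_of_mul_le_mul_left h5 hN'
    linarith
  · have h1 : N * (∑ p ∈ Nat.primesLE N, Real.log p / p) - Chebyshev.theta N ≤ Real.log N.factorial := by
      rw [hlf, Chebyshev.theta_eq_sum_primesLE_log, Finset.mul_sum, ← Finset.sum_sub_distrib]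
      refine Finset.sum_le_sum fun p hp => ?_
      have hp' := Nat.prime_of_mem_primesLE hp
      have hl := ax_half_le_log hp'.two_le
      calc _ = ((N:ℝ)/p - 1) * Real.log p := by ring
        _ ≤ _ := mul_le_mul_of_nonneg_right (ax_fact_lower hp') (by linarith)
    have h2 := Chebyshev.theta_le_log4_mul_x hN'.le
    have h3 : Real.log N.factorial ≤ N * Real.log N := by
      rw [← Real.log_pow]
      exact Real.log_le_log (by exact_mod_cast N.factorial_pos) (by exact_mod_cast N.factorial_le_pow)
    have h4 : Real.log 4 ≤ 2 := by
      rw [show (4:ℝ) = 2^2 by norm_num, Real.log_pow]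
      have := Real.log_two_lt_d9
      norm_num; linarith
    have h5 : (N:ℝ) * (∑ p ∈ Nat.primesLE N, Real.log p / p) ≤ N * (Real.log N + Real.log 4) := by
      nlinarith
    have := le_of_mul_le_mul_left h5 hN'
    linarith

lemma ax_abel (c : ℕ → ℝ) (g : ℕ → ℂ) (N : ℕ) :
    ∑ k ∈ Finset.range N, (c k : ℂ) * g k = ((∑ k ∈ Finset.range N, c k : ℝ) : ℂ) * g N -
      ∑ k ∈ Finset.range N, ((∑ i ∈ Finset.range (k+1), c i : ℝ) : ℂ) * (g (k+1) - g k) := by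
  induction N with
  | zero => simp
  | succ n ih =>
    rw [Finset.sum_range_succ, ih, Finset.sum_range_succ (fun k => ((∑ i ∈ Finset.range (k+1), c i : ℝ) : ℂ) * (g (k+1) - g k)), Finset.sum_range_succ c n]
    push_cast
    ring

lemma ax_sum_primes {M : Type*} [AddCommMonoid M] (F : ℕ → M) (N : ℕ) :
    ∑ p ∈ Nat.primesLE N, F p =
      ∑ k ∈ Finset.range N, if (k+1).Prime then F (k+1) else 0 := by
  rw [Nat.primesLE_eq_filter_range, Finset.sum_filter, Finset.sum_range_succ']
  simp [Nat.not_prime_zero]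

lemma ax_log_step (k : ℕ) : 0 ≤ Real.log (k+1) - Real.log k ∧ Real.log (k+1) - Real.log k ≤ 1 := by
  rcases Nat.eq_zero_or_pos k with rfl | hk
  · simp
  have hk' : (1:ℝ) ≤ k := by exact_mod_cast hk
  constructor
  · have := Real.log_le_log (by linarith) (show (k:ℝ) ≤ k + 1 by linarith)
    linarith
  · rw [← Real.log_div (by linarith) (by linarith)]
    have := Real.log_le_sub_one_of_pos (x := ((k:ℝ)+1)/k) (by positivity)
    have h : ((k:ℝ)+1)/k - 1 = 1/k := by field_simp; ring
    have : 1/(k:ℝ) ≤ 1 := by rw [div_le_one (by linarith)]; exact hk'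
    linarith

lemma ax_equi (G : ℝ → ℂ) (hG : Continuous G) (K : ℝ) (hK : 0 ≤ K) (hL : ∀ a b, ‖G a - G b‖ ≤ K * |a - b|) :
    Tendsto (fun N : ℕ => ∑ p ∈ Nat.primesLE N,
      ((Real.log p / p / Real.log N : ℝ) : ℂ) * G (Real.log p / Real.log N)) atTop
      (𝓝 (∫ v in (0:ℝ)..1, G v)) := by
  obtain ⟨C, hC0, hC⟩ := ax_mertens
  rw [tendsto_iff_norm_sub_tendsto_zero]
  have hlim : Tendsto (fun N : ℕ => (C * (‖G 0‖ + K * 2) + C * (K * 2) + K) / Real.log N) atTop (𝓝 0) :=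
    Tendsto.div_atTop tendsto_const_nhds (Real.tendsto_log_atTop.comp tendsto_natCast_atTop_atTop)
  refine squeeze_zero' (Eventually.of_forall fun _ => norm_nonneg _) ?_ hlim
  filter_upwards [eventually_ge_atTop 2] with N hN
  set L := Real.log N with hLdef
  have hN' : (2:ℝ) ≤ N := by exact_mod_cast hN
  have hLpos : 0 < L := Real.log_pos (by linarith)
  have hL2 : Real.log (N+1) ≤ 2 * L := by
    have : Real.log (N+1) ≤ Real.log ((N:ℝ)^2) := Real.log_le_log (by positivity) (by nlinarith)
    rw [Real.log_pow] at this
    exact_mod_cast this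
  let a : ℕ → ℝ := fun k => if (k+1).Prime then Real.log ((k+1:ℕ):ℝ) / ((k+1:ℕ):ℝ) else 0
  let l : ℕ → ℝ := fun k => Real.log ((k+1:ℕ):ℝ) - Real.log k
  let c : ℕ → ℝ := fun k => a k - l k
  let g : ℕ → ℂ := fun k => G (Real.log ((k+1:ℕ):ℝ) / L)
  have hl0 : ∀ k, 0 ≤ l k := fun k => by simpa [l] using (ax_log_step k).1
  have hl1 : ∀ k, l k ≤ 1 := fun k => by simpa [l] using (ax_log_step k).2
  have hlsum : ∀ n, ∑ k ∈ Finset.range n, l k = Real.log n := fun n => by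
    have := Finset.sum_range_sub (fun k : ℕ => Real.log (k:ℝ)) n
    simpa [l] using this
  have hS : ∀ n, |∑ k ∈ Finset.range n, c k| ≤ C := fun n => by
    have := hC n
    rw [ax_sum_primes (fun p : ℕ => Real.log p / p)] at this
    rw [Finset.sum_sub_distrib, hlsum]
    exact this
  have hgstep : ∀ k, ‖g (k+1) - g k‖ ≤ K * (l (k+1) / L) := fun k => by
    refine (hL _ _).trans (le_of_eq ?_)
    rw [← sub_div, abs_div, abs_of_pos hLpos, abs_of_nonneg (hl0 (k+1))]
  have hgN : ‖g N‖ ≤ ‖G 0‖ + K * 2 := by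
    have h1 := hL (Real.log ((N+1:ℕ):ℝ) / L) 0
    have h2 : |Real.log ((N+1:ℕ):ℝ) / L - 0| ≤ 2 := by
      rw [sub_zero, abs_of_nonneg (div_nonneg (Real.log_natCast_nonneg _) hLpos.le), div_le_iff₀ hLpos]
      exact_mod_cast hL2
    have h3 := norm_le_norm_add_norm_sub' (g N) (G 0)
    have h4 := mul_le_mul_of_nonneg_left h2 hK
    change ‖g N - G 0‖ ≤ _ at h1
    linarith
  have hT : ‖∑ k ∈ Finset.range N, (c k : ℂ) * g k‖ ≤ C * (‖G 0‖ + K * 2) + C * (K * 2) := by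
    rw [ax_abel]
    refine (norm_sub_le _ _).trans (add_le_add ?_ ?_)
    · rw [norm_mul, Complex.norm_real]
      exact mul_le_mul (hS N) hgN (norm_nonneg _) hC0
    · calc _ ≤ ∑ k ∈ Finset.range N, C * (K * (l (k+1) / L)) := by
            refine norm_sum_le_of_le _ fun k _ => ?_
            rw [norm_mul, Complex.norm_real]
            exact mul_le_mul (hS _) (hgstep k) (norm_nonneg _) hC0
        _ = C * (K * ((∑ k ∈ Finset.range N, l (k+1)) / L)) := by
            rw [← Finset.mul_sum, ← Finset.mul_sum, Finset.sum_div]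
        _ ≤ _ := by
            have h1 := hlsum (N+1)
            rw [Finset.sum_range_succ'] at h1
            have h2 := hl0 0
            have : (∑ k ∈ Finset.range N, l (k+1)) / L ≤ 2 := by
              rw [div_le_iff₀ hLpos]; push_cast at h1; linarith
            gcongr
  have hR : ‖∑ k ∈ Finset.range N, ((l k / L : ℝ) : ℂ) * g k - ∫ v in (0:ℝ)..1, G v‖ ≤ K / L := by
    have h1 : ∫ v in (0:ℝ)..1, G v = ∑ k ∈ Finset.range N,
        ∫ v in (Real.log (k:ℝ) / L)..(Real.log ((k+1:ℕ):ℝ) / L), G v := by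
      rw [intervalIntegral.sum_integral_adjacent_intervals (a := fun k : ℕ => Real.log (k:ℝ) / L)]
      · simp [← hLdef, div_self hLpos.ne']
      · intro k _; exact hG.intervalIntegrable _ _
    rw [h1, ← Finset.sum_sub_distrib]
    calc _ ≤ ∑ k ∈ Finset.range N, K / L * (l k / L) := by
          refine norm_sum_le_of_le _ fun k _ => ?_
          set x := Real.log (k:ℝ) / L
          set y := Real.log ((k+1:ℕ):ℝ) / L with hy
          have hxy : y - x = l k / L := by simp only [x, y, l]; ring
          have hxy0 : x ≤ y := by
            have := div_nonneg (hl0 k) hLpos.le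
            linarith
          have h2 : ((l k / L : ℝ) : ℂ) * g k = ∫ v in x..y, G y := by
            rw [intervalIntegral.integral_const, hxy]; simp [g, hy]
          rw [h2, ← intervalIntegral.integral_sub (by simp) (hG.intervalIntegrable _ _)]
          have h3 : ∀ v ∈ Set.uIoc x y, ‖G y - G v‖ ≤ K * (1 / L) := fun v hv => by
            rw [Set.uIoc_of_le hxy0] at hv
            refine (hL _ _).trans (mul_le_mul_of_nonneg_left ?_ hK)
            rw [abs_of_nonneg (by linarith [hv.2])]
            have : l k / L ≤ 1 / L := div_le_div_of_nonneg_right (hl1 k) hLpos.le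
            linarith [hv.1]
          refine (intervalIntegral.norm_integral_le_of_norm_le_const h3).trans (le_of_eq ?_)
          rw [hxy, abs_of_nonneg (div_nonneg (hl0 k) hLpos.le)]; ring
      _ = K / L := by
          rw [← Finset.mul_sum, ← Finset.sum_div, hlsum, ← hLdef, div_self hLpos.ne', mul_one]
  have hsplit : ∑ p ∈ Nat.primesLE N,
      ((Real.log p / p / L : ℝ) : ℂ) * G (Real.log p / L) =
      (∑ k ∈ Finset.range N, (c k : ℂ) * g k) / L + ∑ k ∈ Finset.range N, ((l k / L : ℝ) : ℂ) * g k := by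
    rw [ax_sum_primes (fun p : ℕ => ((Real.log p / p / L : ℝ) : ℂ) * G (Real.log p / L)), Finset.sum_div,
      ← Finset.sum_add_distrib]
    refine Finset.sum_congr rfl fun k _ => ?_
    simp only [c, a, g]
    split_ifs
    · push_cast; ring
    · push_cast; ring
  rw [hsplit, add_sub_assoc]
  refine (norm_add_le _ _).trans ?_
  rw [norm_div, Complex.norm_real, Real.norm_of_nonneg hLpos.le, add_div]
  gcongr
lemma ax_prod_sub {ι : Type*} [DecidableEq ι] (s : Finset ι) (a b : ι → ℂ) (ha : ∀ i ∈ s, ‖a i‖ ≤ 1)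
    (hb : ∀ i ∈ s, ‖b i‖ ≤ 1) : ‖∏ i ∈ s, a i - ∏ i ∈ s, b i‖ ≤ ∑ i ∈ s, ‖a i - b i‖ := by
  induction s using Finset.induction_on with
  | empty => simp
  | insert i s hi ih =>
    rw [Finset.prod_insert hi, Finset.prod_insert hi, Finset.sum_insert hi]
    have h1 := ih (fun j hj => ha j (Finset.mem_insert_of_mem hj))
      (fun j hj => hb j (Finset.mem_insert_of_mem hj))
    have h2 : ‖∏ j ∈ s, b j‖ ≤ 1 := by
      rw [norm_prod]
      exact Finset.prod_le_one (fun _ _ => norm_nonneg _)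
        (fun j hj => hb j (Finset.mem_insert_of_mem hj))
    have h3 := ha i (Finset.mem_insert_self i s)
    calc _ = ‖a i * (∏ j ∈ s, a j - ∏ j ∈ s, b j) + (a i - b i) * ∏ j ∈ s, b j‖ := by congr 1; ring
      _ ≤ ‖a i‖ * ‖∏ j ∈ s, a j - ∏ j ∈ s, b j‖ + ‖a i - b i‖ * ‖∏ j ∈ s, b j‖ := by
          rw [← norm_mul, ← norm_mul]; exact norm_add_le _ _
      _ ≤ 1 * (∑ j ∈ s, ‖a j - b j‖) + ‖a i - b i‖ * 1 := by gcongr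
      _ = _ := by ring

/-- The continuous extension of `(e^{iλv}-1)/v`. -/
def axG (lam v : ℝ) : ℂ := ∫ t in (0:ℝ)..1, Complex.I * lam * Complex.exp (Complex.I * (lam * v * t : ℝ))

lemma ax_exp_lip (x y : ℝ) : ‖Complex.exp (Complex.I * x) - Complex.exp (Complex.I * y)‖ ≤ |x - y| := by
  have h : Complex.exp (Complex.I * x) - Complex.exp (Complex.I * y) =
      Complex.exp (Complex.I * y) * (Complex.exp (Complex.I * ((x - y : ℝ) : ℂ)) - 1) := by
    rw [mul_sub, ← Complex.exp_add]; push_cast; ring_nf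
  rw [h, norm_mul, mul_comm Complex.I (y:ℂ), Complex.norm_exp_ofReal_mul_I, one_mul]
  exact Real.norm_exp_I_mul_ofReal_sub_one_le

lemma axG_norm (lam v : ℝ) : ‖axG lam v‖ ≤ |lam| := by
  have := intervalIntegral.norm_integral_le_of_norm_le_const (a := (0:ℝ)) (b := 1) (C := |lam|)
    (f := fun t : ℝ => Complex.I * lam * Complex.exp (Complex.I * (lam * v * t : ℝ))) (fun t _ => by
      rw [norm_mul, mul_comm Complex.I (((lam * v * t : ℝ)):ℂ), Complex.norm_exp_ofReal_mul_I]
      simp)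
  simpa [axG] using this

lemma axG_lip (lam a b : ℝ) : ‖axG lam a - axG lam b‖ ≤ lam^2 * |a - b| := by
  unfold axG
  rw [← intervalIntegral.integral_sub]
  · have := intervalIntegral.norm_integral_le_of_norm_le_const (a := (0:ℝ)) (b := 1)
      (C := lam^2 * |a - b|)
      (f := fun t : ℝ => Complex.I * lam * Complex.exp (Complex.I * (lam * a * t : ℝ)) -
        Complex.I * lam * Complex.exp (Complex.I * (lam * b * t : ℝ))) (fun t ht => by
        rw [Set.uIoc_of_le zero_le_one] at ht
        rw [← mul_sub, norm_mul]
        have h1 := ax_exp_lip (lam * a * t) (lam * b * t)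
        have h2 : |lam * a * t - lam * b * t| ≤ |lam| * |a - b| := by
          rw [show lam * a * t - lam * b * t = lam * (a - b) * t by ring, abs_mul, abs_mul]
          have : |t| ≤ 1 := by rw [abs_of_pos ht.1]; exact ht.2
          exact mul_le_of_le_one_right (by positivity) this
        calc _ ≤ ‖Complex.I * (lam:ℂ)‖ * (|lam| * |a - b|) := by
              gcongr; exact h1.trans h2
          _ = |lam|^2 * |a - b| := by
              rw [norm_mul, Complex.norm_I, Complex.norm_real, Real.norm_eq_abs]; ring
          _ = _ := by rw [sq_abs])
    simpa using this
  · exact Continuous.intervalIntegrable (by fun_prop) _ _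
  · exact Continuous.intervalIntegrable (by fun_prop) _ _

lemma axG_cont (lam : ℝ) : Continuous (axG lam) := by
  have : LipschitzWith ⟨lam^2, sq_nonneg _⟩ (axG lam) := LipschitzWith.of_dist_le_mul fun a b => by
    rw [dist_eq_norm, Real.dist_eq]; exact axG_lip lam a b
  exact this.continuous

lemma axG_mul (lam v : ℝ) : (v:ℂ) * axG lam v = Complex.exp (Complex.I * lam * v) - 1 := by
  by_cases h : lam * v = 0
  · rcases mul_eq_zero.1 h with rfl | rfl <;> simp [axG]
  · have hc : Complex.I * lam * v ≠ 0 := by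
      rw [mul_assoc]; exact mul_ne_zero Complex.I_ne_zero (by exact_mod_cast h)
    have h1 := integral_exp_mul_complex (a := 0) (b := 1) hc
    have h2 : axG lam v = Complex.I * lam * ∫ t in (0:ℝ)..1, Complex.exp (Complex.I * lam * v * t) := by
      rw [axG, ← intervalIntegral.integral_const_mul]
      congr 1; ext t; push_cast; ring_nf
    rw [h2, h1]
    have : Complex.I ≠ 0 := Complex.I_ne_zero
    have hl : (lam:ℂ) ≠ 0 := by rintro h'; simp at h'; simp [h'] at h
    have hv : (v:ℂ) ≠ 0 := by rintro h'; simp at h'; simp [h'] at h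
    field_simp
    simp

lemma ax_phi (lam : ℝ) : phi lam = Complex.exp (∫ v in (0:ℝ)..1, axG lam v) := by
  unfold phi
  congr 1
  refine intervalIntegral.integral_congr_ae (Eventually.of_forall fun v hv => ?_)
  rw [Set.uIoc_of_le zero_le_one] at hv
  rw [if_neg hv.1.ne', ← axG_mul]
  have : (v:ℂ) ≠ 0 := by exact_mod_cast hv.1.ne'
  field_simp

lemma ax_phi_zero : phi 0 = 1 := by simp [ax_phi, axG]

lemma ax_phi_cont : ContinuousAt phi 0 := by
  have h : phi = fun lam => Complex.exp (∫ v in (0:ℝ)..1, axG lam v) := funext ax_phi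
  rw [h]
  refine Complex.continuous_exp.continuousAt.comp ?_
  have h0 : ∫ v in (0:ℝ)..1, axG 0 v = 0 := by simp [axG]
  rw [ContinuousAt, h0]
  refine squeeze_zero_norm (a := fun x : ℝ => |x|) (fun x => ?_) ?_
  · have := intervalIntegral.norm_integral_le_of_norm_le_const (a := (0:ℝ)) (b := 1) (C := |x|)
      (f := axG x) (fun t _ => axG_norm x t)
    simpa using this
  · simpa using (continuous_abs.tendsto (0:ℝ))

lemma ax_main (lam : ℝ) : Tendsto (fun N : ℕ => ∏ p ∈ Nat.primesLE N,
          ((p : ℂ) / (1 + (p : ℂ)) +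
            Complex.exp (Complex.I * lam * Real.log p / Real.log N) / (1 + (p : ℂ))))
        atTop (𝓝 (phi lam)) := by
  obtain ⟨D, hD, hb⟩ := ax_bound
  have hE := ax_equi (axG lam) (axG_cont lam) (lam^2) (sq_nonneg _) (axG_lip lam)
  let e : ℕ → ℕ → ℂ := fun N p => Complex.exp (Complex.I * lam * Real.log p / Real.log N) - 1
  have hen : ∀ N : ℕ, 2 ≤ N → ∀ p : ℕ, ‖e N p‖ ≤ |lam| * (Real.log p / Real.log N) := by
    intro N hN p
    have h1 := ax_exp_lip (lam * (Real.log p / Real.log N)) 0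
    have h2 := div_nonneg (Real.log_natCast_nonneg p) (Real.log_natCast_nonneg N)
    rw [sub_zero, abs_mul, abs_of_nonneg h2] at h1
    convert h1 using 2
    simp only [e]; push_cast; simp; ring_nf
  -- Riemann sums with `1/(1+p)`
  have hS : Tendsto (fun N : ℕ => ∑ p ∈ Nat.primesLE N, e N p / (1 + (p:ℂ))) atTop
      (𝓝 (∫ v in (0:ℝ)..1, axG lam v)) := by
    have hdiff : Tendsto (fun N : ℕ => ∑ p ∈ Nat.primesLE N, e N p / (1 + (p:ℂ)) -
        ∑ p ∈ Nat.primesLE N, ((Real.log p / p / Real.log N : ℝ) : ℂ) *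
          axG lam (Real.log p / Real.log N)) atTop (𝓝 0) := by
      have hlim : Tendsto (fun N : ℕ => (2 * |lam| * D) / Real.log N) atTop (𝓝 0) :=
        Tendsto.div_atTop tendsto_const_nhds (Real.tendsto_log_atTop.comp tendsto_natCast_atTop_atTop)
      refine squeeze_zero_norm' ?_ hlim
      filter_upwards [eventually_ge_atTop 2] with N hN
      have hLpos : 0 < Real.log N := by linarith [ax_half_le_log hN]
      rw [← Finset.sum_sub_distrib]
      calc _ ≤ ∑ p ∈ Nat.primesLE N, 2 * |lam| / Real.log N * ((Real.log p)^2 / (p:ℝ)^2) := by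
            refine norm_sum_le_of_le _ fun p hp => ?_
            have hp2 := Nat.two_le_of_mem_primesLE hp
            have hp0 : (0:ℝ) < p := by positivity
            have hl := ax_half_le_log hp2
            have h1 : ((Real.log p / p / Real.log N : ℝ) : ℂ) *
                axG lam (Real.log p / Real.log N) = e N p / p := by
              have := axG_mul lam (Real.log p / Real.log N)
              rw [show ((Real.log p / p / Real.log N : ℝ) : ℂ) =
                ((Real.log p / Real.log N : ℝ) : ℂ) / p by push_cast; ring, div_mul_eq_mul_div, this]
              simp only [e]; push_cast; ring_nf
            have hpc : (p:ℂ) ≠ 0 := by exact_mod_cast hp0.ne'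
            have hpc1 : (1 + p:ℂ) ≠ 0 := by exact_mod_cast (by positivity : (1 + p:ℝ) ≠ 0)
            have h2 : e N p / (1 + (p:ℂ)) - e N p / p = - (e N p * ((1 / ((p:ℝ) * (1 + p)) : ℝ) : ℂ)) := by
              push_cast; field_simp; ring
            rw [h1, h2, norm_neg, norm_mul, Complex.norm_real, Real.norm_of_nonneg (by positivity)]
            calc _ ≤ |lam| * (Real.log p / Real.log N) * (1 / (p:ℝ)^2) := by
                  gcongr
                  · exact hen N hN p
                  · nlinarith
              _ = 2 * |lam| / Real.log N * ((1/2) * Real.log p / (p:ℝ)^2) := by ring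
              _ ≤ _ := by gcongr; nlinarith
        _ ≤ _ := by
            rw [← Finset.mul_sum]
            exact (mul_le_mul_of_nonneg_left (hb N) (by positivity)).trans (le_of_eq (by ring))
    simpa using hdiff.add hE
  have hexp : Tendsto (fun N : ℕ => ∏ p ∈ Nat.primesLE N, Complex.exp (e N p / (1 + (p:ℂ)))) atTop
      (𝓝 (phi lam)) := by
    rw [ax_phi]
    simp_rw [← Complex.exp_sum]
    exact (Complex.continuous_exp.tendsto _).comp hS
  have hdiff : Tendsto (fun N : ℕ => ∏ p ∈ Nat.primesLE N,
          ((p : ℂ) / (1 + (p : ℂ)) +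
            Complex.exp (Complex.I * lam * Real.log p / Real.log N) / (1 + (p : ℂ))) -
          ∏ p ∈ Nat.primesLE N, Complex.exp (e N p / (1 + (p:ℂ)))) atTop (𝓝 0) := by
    have hlim : Tendsto (fun N : ℕ => (2 * lam^2 * D) / Real.log N) atTop (𝓝 0) :=
        Tendsto.div_atTop tendsto_const_nhds (Real.tendsto_log_atTop.comp tendsto_natCast_atTop_atTop)
    refine squeeze_zero_norm' ?_ hlim
    filter_upwards [eventually_ge_atTop 2] with N hN
    have hLhalf := ax_half_le_log hN
    have hLpos : 0 < Real.log N := by linarith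
    have hone : ∀ p : ℕ, ‖Complex.exp (Complex.I * lam * Real.log p / Real.log N)‖ = 1 := fun p => by
      rw [show Complex.I * lam * Real.log p / Real.log N =
        ((lam * Real.log p / Real.log N : ℝ) : ℂ) * Complex.I by push_cast; ring]
      exact Complex.norm_exp_ofReal_mul_I _
    have hrew : ∀ p : ℕ, (p : ℂ) / (1 + (p : ℂ)) +
            Complex.exp (Complex.I * lam * Real.log p / Real.log N) / (1 + (p : ℂ)) =
            1 + e N p / (1 + (p:ℂ)) := fun p => by
      have hpc1 : (1 + p:ℂ) ≠ 0 := by exact_mod_cast (by positivity : (1 + p:ℝ) ≠ 0)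
      simp only [e]; field_simp; ring
    have hn1 : ∀ p : ℕ, ‖(1 + p : ℂ)‖ = 1 + p := fun p => by
      rw [show (1 + p : ℂ) = ((1 + p : ℝ) : ℂ) by push_cast; rfl, Complex.norm_real]
      exact Real.norm_of_nonneg (by positivity)
    refine (ax_prod_sub _ _ _ ?_ ?_).trans ?_
    · intro p hp
      refine (norm_add_le _ _).trans ?_
      rw [norm_div, norm_div, hone, hn1, Complex.norm_natCast, ← add_div, add_comm (p:ℝ) 1,
        div_self (by positivity)]
    · intro p hp
      rw [Complex.norm_exp]
      refine Real.exp_le_one_iff.2 ?_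
      rw [show (1 + p : ℂ) = ((1 + p : ℝ) : ℂ) by push_cast; rfl, Complex.div_ofReal_re]
      refine div_nonpos_of_nonpos_of_nonneg ?_ (by positivity)
      simp only [e, Complex.sub_re, Complex.one_re]
      linarith [Complex.re_le_norm (Complex.exp (Complex.I * lam * Real.log p / Real.log N)), hone p]
    · calc _ ≤ ∑ p ∈ Nat.primesLE N, 2 * lam^2 / Real.log N * ((Real.log p)^2 / (p:ℝ)^2) := by
            refine Finset.sum_le_sum fun p hp => ?_
            have hp2 := Nat.two_le_of_mem_primesLE hp
            have hp0 : (2:ℝ) ≤ p := by exact_mod_cast hp2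
            have hl := ax_half_le_log hp2
            rw [hrew]
            have hz1 : ‖e N p / (1 + (p:ℂ))‖ ≤ 1 := by
              rw [norm_div, hn1, div_le_one (by positivity)]
              refine (norm_sub_le _ _).trans ?_
              rw [hone]; simp; linarith
            have h3 := Complex.norm_exp_sub_one_sub_id_le hz1
            rw [show (1 + e N p / (1 + (p:ℂ)) - Complex.exp (e N p / (1 + (p:ℂ)))) =
              -(Complex.exp (e N p / (1 + (p:ℂ))) - 1 - e N p / (1 + (p:ℂ))) by ring, norm_neg]
            refine h3.trans ?_
            have h4 : ‖e N p / (1 + (p:ℂ))‖ ≤ |lam| * (Real.log p / Real.log N) / p := by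
              rw [norm_div, hn1]
              gcongr
              · exact hen N hN p
              · linarith
            calc _ ≤ (|lam| * (Real.log p / Real.log N) / p)^2 := by gcongr
              _ = 2 * lam^2 / Real.log N * ((1/2) / Real.log N * ((Real.log p)^2 / (p:ℝ)^2)) := by
                  rw [div_pow, mul_pow, sq_abs]; field_simp
              _ ≤ 2 * lam^2 / Real.log N * (1 * ((Real.log p)^2 / (p:ℝ)^2)) := by
                  gcongr
                  rw [div_le_one hLpos]; exact hLhalf
              _ = _ := by ring
        _ ≤ _ := by
            rw [← Finset.mul_sum]
            exact (mul_le_mul_of_nonneg_left (hb N) (by positivity)).trans (le_of_eq (by ring))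
  simpa using hdiff.add hexp

lemma ax_prod_range {M : Type*} [CommMonoid M] (F : ℕ → M) (m : ℕ) (hm : 1 ≤ m) :
    ∏ j ∈ Finset.range m, F (nthPrime j) = ∏ p ∈ Nat.primesLE (nthPrime (m-1)), F p := by
  have hinj := Nat.nth_strictMono Nat.infinite_setOfPred_prime
  refine Finset.prod_bij (fun j _ => nthPrime j) ?_ ?_ ?_ ?_
  · intro j hj
    rw [Finset.mem_range] at hj
    exact Nat.mem_primesLE.2 ⟨hinj.monotone (by omega), Nat.prime_nth_prime j⟩
  · intro a _ b _ h; exact hinj.injective h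
  · intro p hp
    obtain ⟨h1, h2⟩ := Nat.mem_primesLE.1 hp
    refine ⟨Nat.count Nat.Prime p, ?_, Nat.nth_count h2⟩
    rw [Finset.mem_range]
    have : Nat.nth Nat.Prime (Nat.count Nat.Prime p) ≤ Nat.nth Nat.Prime (m-1) := by
      rw [Nat.nth_count h2]; exact h1
    have := hinj.le_iff_le.1 this
    omega
  · intro j _; rfl

lemma ax_part1 (lam : ℝ) :
      Tendsto (fun m : ℕ => ∏ j ∈ Finset.range m,
          ((nthPrime j : ℂ) / (1 + (nthPrime j : ℂ)) +
            Complex.exp (Complex.I * lam * Real.log (nthPrime j) /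
              Real.log (nthPrime (m - 1))) / (1 + (nthPrime j : ℂ))))
        atTop (𝓝 (phi lam)) := by
  have ht : Tendsto (fun m : ℕ => nthPrime (m - 1)) atTop atTop :=
    (Nat.nth_strictMono Nat.infinite_setOfPred_prime).tendsto_atTop.comp (tendsto_sub_atTop_nat 1)
  refine ((ax_main lam).comp ht).congr' ?_
  filter_upwards [eventually_ge_atTop 1] with m hm
  exact (ax_prod_range (fun p : ℕ => ((p : ℂ) / (1 + (p : ℂ)) +
            Complex.exp (Complex.I * lam * Real.log p / Real.log (nthPrime (m-1))) / (1 + (p : ℂ)))) m hm).symm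

lemma ax_np (j : ℕ) : (0:ℝ) < nthPrime j := by exact_mod_cast (Nat.prime_nth_prime j).pos

lemma ax_Z_pos (m : ℕ) : 0 < Zm m := Finset.prod_pos fun j _ => by
  have := ax_np j; positivity

lemma ax_mass_nonneg (m : ℕ) (ν : Fin m → Bool) : 0 ≤ mass m ν := by
  have := ax_Z_pos m
  refine mul_nonneg (by positivity) (Finset.prod_nonneg fun j _ => ?_)
  have := ax_np j
  split_ifs <;> positivity

lemma ax_sum (m : ℕ) (lam : ℝ) : ∑ ν : Fin m → Bool, (mass m ν : ℂ) * Complex.exp (Complex.I * lam * zetam m ν)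
    = ∏ j ∈ Finset.range m,
          ((nthPrime j : ℂ) / (1 + (nthPrime j : ℂ)) +
            Complex.exp (Complex.I * lam * Real.log (nthPrime j) /
              Real.log (nthPrime (m - 1))) / (1 + (nthPrime j : ℂ))) := by
  set L := Real.log (nthPrime (m - 1))
  let f : Fin m → Bool → ℂ := fun j b =>
    (if b then (nthPrime j : ℂ) else 1)⁻¹ *
      (if b then Complex.exp (Complex.I * lam * Real.log (nthPrime j) / L) else 1)
  have h1 : ∀ ν : Fin m → Bool, (mass m ν : ℂ) * Complex.exp (Complex.I * lam * zetam m ν) =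
      (1 / (Zm m : ℂ)) * ∏ j, f j (ν j) := by
    intro ν
    have h2 : Complex.exp (Complex.I * lam * zetam m ν) =
        ∏ j : Fin m, (if ν j then Complex.exp (Complex.I * lam * Real.log (nthPrime j) / L) else 1) := by
      have : Complex.I * lam * zetam m ν = ∑ j : Fin m,
          (if ν j then Complex.I * lam * Real.log (nthPrime j) / L else 0) := by
        simp only [zetam]
        rw [Complex.ofReal_mul, Complex.ofReal_div, Complex.ofReal_one, Complex.ofReal_sum,
          Finset.mul_sum, Finset.mul_sum]
        refine Finset.sum_congr rfl fun j _ => ?_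
        split_ifs
        · simp only [L]; ring
        · simp
      rw [this, Complex.exp_sum]
      refine Finset.prod_congr rfl fun j _ => ?_
      split_ifs <;> simp
    rw [h2]
    simp only [f, mass, Finset.prod_mul_distrib]
    push_cast
    rw [mul_assoc]
    congr 2
    refine Finset.prod_congr rfl fun j _ => ?_
    split_ifs <;> simp
  simp_rw [h1]
  rw [← Finset.mul_sum, ← Fintype.prod_sum]
  have hf : ∀ j : Fin m, ∑ b, f j b = (nthPrime j : ℂ)⁻¹ *
      Complex.exp (Complex.I * lam * Real.log (nthPrime j) / L) + 1 := fun j => by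
    rw [Fintype.sum_bool]; simp [f]
  simp_rw [hf]
  rw [Fin.prod_univ_eq_prod_range (fun j => (nthPrime j : ℂ)⁻¹ *
      Complex.exp (Complex.I * lam * Real.log (nthPrime j) / L) + 1) m]
  rw [Zm, one_div]
  push_cast
  rw [← Finset.prod_inv_distrib, ← Finset.prod_mul_distrib]
  refine Finset.prod_congr rfl fun j _ => ?_
  have h3 := ax_np j
  have h4 : (nthPrime j : ℂ) ≠ 0 := by exact_mod_cast h3.ne'
  have h5 : (1 + nthPrime j : ℂ) ≠ 0 := by exact_mod_cast (by positivity : (1 + nthPrime j:ℝ) ≠ 0)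
  have h6 : (1 + 1 / (nthPrime j : ℂ)) = (1 + nthPrime j) / nthPrime j := by field_simp; ring
  rw [h6]
  simp
  field_simp
  ring

lemma ax_mass_sum (m : ℕ) : ∑ ν : Fin m → Bool, mass m ν = 1 := by
  have h := ax_sum m 0
  have h2 : ∏ j ∈ Finset.range m,
          ((nthPrime j : ℂ) / (1 + (nthPrime j : ℂ)) +
            Complex.exp (Complex.I * (0:ℝ) * Real.log (nthPrime j) /
              Real.log (nthPrime (m - 1))) / (1 + (nthPrime j : ℂ))) = 1 := by
    refine Finset.prod_eq_one fun j _ => ?_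
    have h3 := ax_np j
    have h5 : (1 + nthPrime j : ℂ) ≠ 0 := by exact_mod_cast (by positivity : (1 + nthPrime j:ℝ) ≠ 0)
    simp
    field_simp
    ring
  rw [h2] at h
  simp at h
  exact_mod_cast h

instance ax_prob (m : ℕ) : IsProbabilityMeasure (lawZeta m) := by
  constructor
  rw [lawZeta, Measure.finsetSum_apply]
  simp only [Measure.smul_apply, measure_univ, smul_eq_mul, mul_one]
  rw [← ENNReal.ofReal_sum_of_nonneg (fun ν _ => ax_mass_nonneg m ν), ax_mass_sum, ENNReal.ofReal_one]

lemma ax_charFun (m : ℕ) (lam : ℝ) : charFun (lawZeta m) lam = ∏ j ∈ Finset.range m,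
          ((nthPrime j : ℂ) / (1 + (nthPrime j : ℂ)) +
            Complex.exp (Complex.I * lam * Real.log (nthPrime j) /
              Real.log (nthPrime (m - 1))) / (1 + (nthPrime j : ℂ))) := by
  rw [← ax_sum, charFun_apply_real, lawZeta, integral_finsetSum_measure]
  · refine Finset.sum_congr rfl fun ν _ => ?_
    rw [integral_smul_measure, integral_dirac, ENNReal.toReal_ofReal (ax_mass_nonneg m ν),
      Complex.real_smul]
    congr 2; ring
  · intro ν _
    exact (integrable_dirac (by simp)).smul_measure ENNReal.ofReal_ne_top

theorem characteristic_functions_converge_and_weak_convergence :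
    (∀ lam : ℝ,
      Tendsto (fun m : ℕ => ∏ j ∈ Finset.range m,
          ((nthPrime j : ℂ) / (1 + (nthPrime j : ℂ)) +
            Complex.exp (Complex.I * lam * Real.log (nthPrime j) /
              Real.log (nthPrime (m - 1))) / (1 + (nthPrime j : ℂ))))
        atTop (𝓝 (phi lam))) ∧
    ∃ μ : Measure ℝ, IsProbabilityMeasure μ ∧
      (∀ lam : ℝ, (∫ x, Complex.exp (Complex.I * lam * x) ∂μ) = phi lam) ∧
      ∀ f : BoundedContinuousFunction ℝ ℝ,
        Tendsto (fun m : ℕ => ∫ x, f x ∂(lawZeta m)) atTop (𝓝 (∫ x, f x ∂μ)) := by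
  refine ⟨ax_part1, ?_⟩
  have hcf : ∀ t : ℝ, Tendsto (fun m => charFun (lawZeta m) t) atTop (𝓝 (phi t)) := fun t => by
    simp_rw [ax_charFun]; exact ax_part1 t
  have htight := isTightMeasureSet_of_tendsto_charFun ax_phi_cont hcf
  let P : ℕ → ProbabilityMeasure ℝ := fun m => ⟨lawZeta m, ax_prob m⟩
  have hcomp : IsCompact (closure (Set.range P)) := by
    refine isCompact_closure_of_isTightMeasureSet (htight.subset ?_)
    rintro _ ⟨_, ⟨m, rfl⟩, rfl⟩
    exact ⟨m, rfl⟩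
  obtain ⟨μ, -, hμ⟩ := hcomp.exists_mapClusterPt_of_frequently (l := atTop) (f := P) (by
    exact Frequently.of_forall fun m => subset_closure ⟨m, rfl⟩)
  have hchar : ∀ t : ℝ, charFun (μ : Measure ℝ) t = phi t := fun t => by
    have hc : Continuous (fun ν : ProbabilityMeasure ℝ => charFun (ν : Measure ℝ) t) := by
      refine continuous_iff_continuousAt.2 fun ν => ?_
      have := (ProbabilityMeasure.tendsto_iff_forall_integral_rclike_tendsto ℂ).1
        (tendsto_id (x := 𝓝 ν)) (BoundedContinuousFunction.innerProbChar t)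
      simp only [ContinuousAt, charFun_eq_integral_innerProbChar]
      exact this
    have h1 := hμ.continuousAt_comp hc.continuousAt
    exact eq_of_nhds_neBot (NeBot.mono (f := 𝓝 _ ⊓ map _ atTop) h1 (inf_le_inf_left _ (hcf t)))
  have hconv : Tendsto P atTop (𝓝 μ) := ProbabilityMeasure.tendsto_of_tendsto_charFun fun t => by
    rw [hchar]; exact hcf t
  refine ⟨μ, inferInstance, fun lam => ?_, fun f => ?_⟩
  · rw [← hchar, charFun_apply_real]
    congr 1; ext x; congr 1; ring
  · exact (ProbabilityMeasure.tendsto_iff_forall_integral_tendsto.1 hconv) f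

end
end

section
/- There exists a constant C>0 such that for all m≥1, | Σ_{j=1}^m 1/p_j − ln ln p_m | ≤ C; that is, the sum of the reciprocals of the first m primes equals ln ln p_m + O(1) as m→∞. -/
open Filter
open scoped Topology

noncomputable section

lemma sum_nth_aux (m : ℕ) (hm : 1 ≤ m) (f : ℕ → ℝ) :
    ∑ j ∈ Finset.range m, f (Nat.nth Nat.Prime j) =
      ∑ p ∈ Finset.range (Nat.nth Nat.Prime (m-1) + 1) with p.Prime, f p := by
  have hinf : (setOf Nat.Prime).Infinite := Nat.infinite_setOfPred_prime
  rw [← Finset.sum_image (g := Nat.nth Nat.Prime) (f := f)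
    ((Nat.nth_injective hinf).injOn)]
  congr 1
  ext p
  simp only [Finset.mem_image, Finset.mem_range, Finset.mem_filter]
  constructor
  · rintro ⟨j, hj, rfl⟩
    have := Nat.nth_monotone hinf (show j ≤ m - 1 by omega)
    exact ⟨by omega, Nat.prime_nth_prime j⟩
  · rintro ⟨h1, h2⟩
    refine ⟨Nat.count Nat.Prime p, ?_, Nat.nth_count h2⟩
    by_contra h
    have := Nat.nth_strictMono hinf (show m - 1 < Nat.count Nat.Prime p by omega)
    rw [Nat.nth_count h2] at this
    omega

/-- abstract partial summation -/
lemma partial_aux (C : ℝ) (A F : ℕ → ℝ)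
    (hA : ∀ N : ℕ, 2 ≤ N → |A N - Real.log N| ≤ C)
    (hF : ∀ N : ℕ, 2 ≤ N → F (N+1) - F N = (A (N+1) - A N) / Real.log ((N+1 : ℕ) : ℝ)) :
    ∃ K : ℝ, 0 < K ∧ ∀ N : ℕ, 2 ≤ N → |F N - Real.log (Real.log N)| ≤ K := by
  have hC : 0 ≤ C := (abs_nonneg _).trans (hA 2 le_rfl)
  have hl2 : 0 < Real.log 2 := Real.log_pos (by norm_num)
  set K := |F 2 - A 2 / Real.log (2:ℕ) - Real.log (Real.log (2:ℕ))| + (C+1) / Real.log 2 with hK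
  have key : ∀ N : ℕ, 2 ≤ N →
      |F N - A N / Real.log N - Real.log (Real.log N)| ≤ K - (C+1) / Real.log N := by
    intro N hN
    induction N, hN using Nat.le_induction with
    | base => rw [hK]; push_cast; linarith
    | succ N hN ih =>
      have hN' : (2:ℝ) ≤ N := by exact_mod_cast hN
      have hx : 0 < Real.log N := Real.log_pos (by linarith)
      have hxy : Real.log N < Real.log ((N+1:ℕ):ℝ) := by
        push_cast; exact Real.log_lt_log (by linarith) (by linarith)
      have hd : Real.log ((N+1:ℕ):ℝ) - Real.log N ≤ 1 := by
        rw [← Real.log_div (by positivity) (by positivity)]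
        refine (Real.log_le_sub_one_of_pos (by positivity)).trans ?_
        rw [sub_le_iff_le_add, div_le_iff₀ (by positivity)]; push_cast; linarith
      have h1 := hF N hN
      have h2 := abs_le.1 (hA N hN)
      set x := Real.log N
      set y := Real.log ((N+1:ℕ):ℝ)
      have hy : 0 < y := hx.trans hxy
      have h3 : Real.log y - Real.log x ≤ (y - x) / x := by
        rw [← Real.log_div hy.ne' hx.ne']
        refine (Real.log_le_sub_one_of_pos (by positivity)).trans (le_of_eq (by field_simp))
      have h4 : (y - x) / y ≤ Real.log y - Real.log x := by
        have := Real.log_le_sub_one_of_pos (show 0 < x / y by positivity)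
        rw [Real.log_div hx.ne' hy.ne'] at this
        have e : (y - x) / y = 1 - x / y := by field_simp
        linarith
      have hw : 0 ≤ 1/x - 1/y := by
        have := one_div_le_one_div_of_le hx hxy.le
        linarith
      have h5 : F (N+1) - A (N+1) / y = F N - A N / x + (y-x)/y + (A N - x) * (1/x - 1/y) := by
        have : F (N+1) = F N + (A (N+1) - A N) / y := by linarith
        rw [this]; field_simp; ring
      have h6 : (A N - x) * (1/x - 1/y) ≤ C * (1/x - 1/y) := mul_le_mul_of_nonneg_right h2.2 hw
      have h7 : -C * (1/x - 1/y) ≤ (A N - x) * (1/x - 1/y) := mul_le_mul_of_nonneg_right h2.1 hw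
      have h8 : (y-x)/x - (y-x)/y ≤ 1/x - 1/y := by
        have : (y-x)/x - (y-x)/y = (y-x) * (1/x - 1/y) := by field_simp
        rw [this]; nlinarith
      have e1 : (C+1)/x - (C+1)/y = C * (1/x - 1/y) + (1/x-1/y) := by field_simp
      rw [abs_le] at ih ⊢
      constructor <;> linarith
  refine ⟨K + (C + 1) / Real.log 2 + 1 , by positivity, fun N hN => ?_⟩
  have hN' : (2:ℝ) ≤ N := by exact_mod_cast hN
  have hx : Real.log 2 ≤ Real.log N := Real.log_le_log (by norm_num) hN'
  have hx0 : 0 < Real.log N := hl2.trans_le hx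
  have h1 := abs_le.1 (key N hN)
  have h2 := abs_le.1 (hA N hN)
  have h3 : A N / Real.log N ≤ 1 + C / Real.log N := by
    rw [div_le_iff₀ hx0, add_mul, div_mul_cancel₀ _ hx0.ne']; linarith
  have h4 : 1 - C / Real.log N ≤ A N / Real.log N := by
    rw [le_div_iff₀ hx0, sub_mul, div_mul_cancel₀ _ hx0.ne']; linarith
  have h5 : (C+1) / Real.log N = C / Real.log N + 1 / Real.log N := add_div _ _ _
  have h6 : 0 < 1 / Real.log N := by positivity
  have h7 : 0 ≤ (C+1) / Real.log 2 := by positivity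
  rw [abs_le]
  constructor <;> linarith

lemma log_factorial_aux (N : ℕ) : Real.log (N.factorial : ℕ) =
    ∑ p ∈ Nat.primesLE N, (N.factorial.factorization p : ℝ) * Real.log p := by
  rw [Real.log_nat_eq_sum_factorization, Finsupp.sum]
  apply Finset.sum_subset
  · intro p hp
    rw [Nat.support_factorization, Nat.mem_primeFactors] at hp
    exact Nat.mem_primesLE.2 ⟨(hp.1.dvd_factorial).1 hp.2.1, hp.1⟩
  · intro p _ hp
    rw [Finsupp.notMem_support_iff.1 hp]; simp

lemma sum_log_aux : ∃ D : ℝ, ∀ N : ℕ,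
    ∑ p ∈ Nat.primesLE N, Real.log p / ((p : ℝ) * (p - 1)) ≤ D := by
  have hs : Summable (fun n : ℕ => 4 * (1 / (n : ℝ) ^ (3/2 : ℝ))) :=
    (Real.summable_one_div_nat_rpow.2 (by norm_num)).mul_left 4
  refine ⟨∑' n : ℕ, 4 * (1 / (n : ℝ) ^ (3/2 : ℝ)), fun N => ?_⟩
  refine le_trans (Finset.sum_le_sum fun p hp => ?_)
    (hs.sum_le_tsum (Nat.primesLE N) (fun n _ => by positivity))
  have h2 : (2:ℝ) ≤ p := by exact_mod_cast Nat.two_le_of_mem_primesLE hp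
  have h0 : (0:ℝ) < p := by linarith
  have hl := Real.log_le_rpow_div h0.le (show (0:ℝ) < 1/2 by norm_num)
  have e : (p:ℝ)^(1/2:ℝ) * (p:ℝ)^(3/2:ℝ) = (p:ℝ)^2 := by
    rw [← Real.rpow_add h0]; norm_num
  have hq : 0 < (p:ℝ)^(3/2:ℝ) := by positivity
  rw [mul_one_div, div_le_div_iff₀ (by nlinarith) hq]
  calc Real.log p * (p:ℝ)^(3/2:ℝ) ≤ ((p:ℝ)^(1/2:ℝ) / (1/2)) * (p:ℝ)^(3/2:ℝ) := by gcongr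
    _ = 2 * (p:ℝ)^2 := by rw [← e]; ring
    _ ≤ 4 * (p * (p-1)) := by nlinarith

lemma mertens_aux : ∃ C : ℝ, ∀ N : ℕ, 2 ≤ N →
    |∑ p ∈ Nat.primesLE N, Real.log p / p - Real.log N| ≤ C := by
  obtain ⟨D, hD⟩ := sum_log_aux
  refine ⟨Real.log 4 + 1 + |D|, fun N hN => ?_⟩
  have hN0 : (0:ℝ) < N := by exact_mod_cast (by omega : 0 < N)
  have hl4 : 0 < Real.log 4 := Real.log_pos (by norm_num)
  have hfac0 : (0:ℝ) < (N.factorial : ℕ) := by exact_mod_cast N.factorial_pos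
  have hth := Chebyshev.theta_le_log4_mul_x hN0.le
  rw [Chebyshev.theta_eq_sum_primesLE_log] at hth
  have hfu : Real.log (N.factorial : ℕ) ≤ N * Real.log N := by
    rw [← Real.log_pow]
    exact Real.log_le_log hfac0 (by exact_mod_cast N.factorial_le_pow)
  have hfl : N * Real.log N - N ≤ Real.log (N.factorial : ℕ) := by
    have h := Real.pow_div_factorial_le_exp N hN0.le N
    have h' := Real.log_le_log (by positivity) h
    rw [Real.log_exp, Real.log_div (by positivity) hfac0.ne', Real.log_pow] at h'
    linarith
  rw [log_factorial_aux] at hfu hfl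
  have hup : N * ∑ p ∈ Nat.primesLE N, Real.log p / p ≤
      ∑ p ∈ Nat.primesLE N, (N.factorial.factorization p : ℝ) * Real.log p
        + ∑ p ∈ Nat.primesLE N, Real.log p := by
    rw [Finset.mul_sum, ← Finset.sum_add_distrib]
    refine Finset.sum_le_sum fun p hp => ?_
    have hpp := Nat.prime_of_mem_primesLE hp
    have hle := Nat.le_of_mem_primesLE hp
    have hp0 : (0:ℝ) < p := by exact_mod_cast hpp.pos
    have hlp : 0 ≤ Real.log p := Real.log_natCast_nonneg p
    have h1 : N / p ≤ N.factorial.factorization p := by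
      rw [Nat.factorization_factorial hpp (Nat.lt_succ_self _)]
      have := Finset.single_le_sum (f := fun i => N / p ^ i) (fun i _ => Nat.zero_le _)
        (show 1 ∈ Finset.Ico 1 (Nat.log p N).succ from by
          have := Nat.log_pos hpp.one_lt hle
          simp only [Finset.mem_Ico]; omega)
      simpa using this
    have h2 : (N:ℝ) / p ≤ N.factorial.factorization p + 1 := by
      have h3 : (N:ℝ) / p < (N / p : ℕ) + 1 := by
        rw [← Nat.floor_div_eq_div (K := ℝ)]
        exact Nat.lt_floor_add_one _
      have h4 : ((N / p : ℕ) : ℝ) ≤ N.factorial.factorization p := by exact_mod_cast h1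
      linarith
    calc (N:ℝ) * (Real.log p / p) = (N / p) * Real.log p := by ring
      _ ≤ (N.factorial.factorization p + 1) * Real.log p := by gcongr
      _ = _ := by ring
  have hlo : ∑ p ∈ Nat.primesLE N, (N.factorial.factorization p : ℝ) * Real.log p ≤
      N * (∑ p ∈ Nat.primesLE N, Real.log p / p
        + ∑ p ∈ Nat.primesLE N, Real.log p / ((p : ℝ) * (p - 1))) := by
    rw [← Finset.sum_add_distrib, Finset.mul_sum]
    refine Finset.sum_le_sum fun p hp => ?_
    have hpp := Nat.prime_of_mem_primesLE hp
    have hp2 : (2:ℝ) ≤ p := by exact_mod_cast hpp.two_le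
    have hlp : 0 ≤ Real.log p := Real.log_natCast_nonneg p
    have h1 : (p - 1) * N.factorial.factorization p ≤ N := by
      rw [Nat.sub_one_mul_factorization_factorial hpp]; exact Nat.sub_le _ _
    have h2 : ((p:ℝ) - 1) * N.factorial.factorization p ≤ N := by
      have : ((p - 1 : ℕ) : ℝ) * N.factorial.factorization p ≤ N := by exact_mod_cast h1
      rwa [Nat.cast_sub hpp.one_le, Nat.cast_one] at this
    have hp1 : (0:ℝ) < p - 1 := by linarith
    have h3 : (N.factorial.factorization p : ℝ) ≤ N / (p - 1) := by
      rw [le_div_iff₀ hp1]; linarith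
    calc (N.factorial.factorization p : ℝ) * Real.log p ≤ N / (p - 1) * Real.log p := by gcongr
      _ = _ := by
        have : (p:ℝ) ≠ 0 := by linarith
        field_simp
        ring
  have hDN := hD N
  have hDa := le_abs_self D
  have hDb := abs_nonneg D
  set A := ∑ p ∈ Nat.primesLE N, Real.log p / p
  rw [abs_le]
  constructor
  · refine le_of_mul_le_mul_left ?_ hN0
    have := mul_le_mul_of_nonneg_left (hDN.trans hDa) hN0.le
    have := mul_pos hN0 hl4
    linarith
  · refine le_of_mul_le_mul_left ?_ hN0
    have := mul_nonneg hN0.le hDb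
    linarith

/-- The sum of reciprocals of the first `m` primes is `ln ln p_m + O(1)`. -/
theorem sum_reciprocal_primes_eq_loglog_add_bigO :
    ∃ C : ℝ, 0 < C ∧ ∀ m : ℕ, 1 ≤ m →
      |(∑ j ∈ Finset.range m, 1 / (nthPrime j : ℝ)) -
        Real.log (Real.log (nthPrime (m - 1)))| ≤ C := by
  obtain ⟨C, hC⟩ := mertens_aux
  obtain ⟨K, hK, h⟩ := partial_aux C (fun N => ∑ p ∈ Nat.primesLE N, Real.log p / p)
    (fun N => ∑ p ∈ Nat.primesLE N, 1 / (p : ℝ)) hC (by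
      intro N hN
      have hl : Real.log ((N + 1 : ℕ) : ℝ) ≠ 0 :=
        (Real.log_pos (by exact_mod_cast (by omega : 1 < N + 1))).ne'
      simp only [Nat.primesLE_succ]
      split_ifs
      · rw [Finset.sum_insert (Nat.notMem_primesLE N), Finset.sum_insert (Nat.notMem_primesLE N)]
        simp only [add_sub_cancel_right]
        field_simp
      · simp)
  refine ⟨K, hK, fun m hm => ?_⟩
  have h1 := h (nthPrime (m - 1)) (Nat.prime_nth_prime (m - 1)).two_le
  have h2 := sum_nth_aux m hm (fun p => 1 / (p : ℝ))
  simp only [nthPrime] at h1 ⊢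
  rw [h2]
  exact h1

end
end

section
/- For every real λ>0, ∫_0^1 (e^{iλv}−1)/v dv = −( γ + ∫_λ^∞ (cos u)/u du + ln λ ) + i·∫_0^λ (sin u)/u du, where ∫_λ^∞ (cos u)/u du denotes the convergent improper integral lim_{T→∞} ∫_λ^T (cos u)/u du, and the integrand (e^{iλv}−1)/v is extended continuously by the value iλ at v=0. -/
open Filter
open scoped Topology

lemma cin_eq (u : ℝ) : (1 - Real.cos u) / u = Real.sin (u/2) * Real.sinc (u/2) := by
  rcases eq_or_ne u 0 with rfl | hu
  · simp
  · rw [Real.sinc_of_ne_zero (by positivity)]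
    have : Real.cos u = 1 - 2 * Real.sin (u/2)^2 := by
      have := Real.cos_two_mul (u/2)
      rw [show 2 * (u/2) = u by ring] at this
      have h2 := Real.sin_sq_add_cos_sq (u/2)
      linarith
    rw [this]; field_simp; ring

lemma cin_cont : Continuous (fun u : ℝ => (1 - Real.cos u) / u) := by
  simp_rw [cin_eq]
  have := Real.continuous_sinc
  fun_prop

noncomputable def kk (x : ℝ) : ℝ := 1 / x - Real.cos (x/2) / (2 * Real.sin (x/2))

lemma sinc_half_pos {x : ℝ} (h0 : 0 ≤ x) (h1 : x ≤ Real.pi) : 0 < Real.sinc (x/2) := by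
  rcases h0.eq_or_lt with rfl | h0
  · simp
  · rw [Real.sinc_of_ne_zero (by positivity)]
    have : 0 < Real.sin (x/2) := Real.sin_pos_of_pos_of_lt_pi (by linarith) (by linarith [Real.pi_pos])
    positivity

lemma G_cont : ContinuousOn (fun x : ℝ => -Real.log (Real.sinc (x/2))) (Set.Icc 0 Real.pi) := by
  have := Real.continuous_sinc
  refine (ContinuousOn.log (by fun_prop) ?_).neg
  intro x hx
  exact (sinc_half_pos hx.1 hx.2).ne'

lemma G_deriv (x : ℝ) (hx : x ∈ Set.Ioo 0 Real.pi) :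
    HasDerivAt (fun x : ℝ => -Real.log (Real.sinc (x/2))) (kk x) x := by
  have hs : 0 < Real.sin (x/2) :=
    Real.sin_pos_of_pos_of_lt_pi (by linarith [hx.1]) (by linarith [Real.pi_pos, hx.2])
  have h0 := hx.1
  have h : HasDerivAt (fun x : ℝ => Real.log (x/2) - Real.log (Real.sin (x/2))) (kk x) x := by
    have h1 : HasDerivAt (fun x : ℝ => x/2) (1/2) x := (hasDerivAt_id x).div_const 2
    have h2 := (h1.log (by positivity)).sub ((h1.sin).log hs.ne')
    refine h2.congr_deriv ?_
    unfold kk; field_simp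
  refine h.congr_of_eventuallyEq ?_
  filter_upwards [Ioo_mem_nhds hx.1 hx.2] with y hy
  have hs : 0 < Real.sin (y/2) :=
    Real.sin_pos_of_pos_of_lt_pi (by linarith [hy.1]) (by linarith [Real.pi_pos, hy.2])
  have h0 := hy.1
  rw [Real.sinc_of_ne_zero (by positivity), Real.log_div hs.ne' (by positivity)]
  ring

lemma kk_nonneg (x : ℝ) (hx : x ∈ Set.Ioo 0 Real.pi) : 0 ≤ kk x := by
  have hs : 0 < Real.sin (x/2) :=
    Real.sin_pos_of_pos_of_lt_pi (by linarith [hx.1]) (by linarith [Real.pi_pos, hx.2])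
  have hc : 0 < Real.cos (x/2) :=
    Real.cos_pos_of_mem_Ioo ⟨by linarith [hx.1, Real.pi_pos], by linarith [hx.2]⟩
  have h0 := hx.1
  have := Real.lt_tan (x := x/2) (by linarith) (by linarith [hx.2])
  rw [Real.tan_eq_sin_div_cos, lt_div_iff₀ hc] at this
  unfold kk
  rw [sub_nonneg, div_le_div_iff₀ (by positivity) h0]
  linarith

lemma kk_int : IntervalIntegrable kk MeasureTheory.volume 0 Real.pi := by
  apply intervalIntegral.intervalIntegrable_deriv_of_nonneg (g := fun x : ℝ => -Real.log (Real.sinc (x/2)))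
  · rw [Set.uIcc_of_le Real.pi_pos.le]; exact G_cont
  · rw [min_eq_left Real.pi_pos.le, max_eq_right Real.pi_pos.le]; exact G_deriv
  · rw [min_eq_left Real.pi_pos.le, max_eq_right Real.pi_pos.le]; exact kk_nonneg

lemma kk_integral : ∫ x in (0:ℝ)..Real.pi, kk x = Real.log (Real.pi / 2) := by
  rw [intervalIntegral.integral_eq_sub_of_hasDerivAt_of_le Real.pi_pos.le G_cont G_deriv kk_int]
  rw [Real.sinc_of_ne_zero (by positivity)]
  simp [← Real.log_inv]

lemma D_eq (m : ℕ) (x : ℝ) (hs : Real.sin (x/2) ≠ 0) :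
    (1 - Real.cos (2 * m * x)) * (Real.cos (x/2) / (2 * Real.sin (x/2))) =
    ∑ j ∈ Finset.range m, (Real.sin ((2*j+1)*x) + Real.sin ((2*j+1)*x) * Real.cos x) := by
  induction m with
  | zero => simp
  | succ m ih =>
    rw [Finset.sum_range_succ, ← ih]
    have e1 : (2:ℝ) * (m + 1 : ℕ) * x = (2*m+1)*x + x := by push_cast; ring
    have e2 : (2:ℝ) * m * x = (2*m+1)*x - x := by ring
    have hsx : Real.sin x = 2 * Real.sin (x/2) * Real.cos (x/2) := by
      rw [← Real.sin_two_mul]; congr 1; ring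
    have hcx : Real.cos x = 2 * Real.cos (x/2)^2 - 1 := by
      rw [← Real.cos_two_mul]; congr 1; ring
    rw [e1, e2, Real.cos_add, Real.cos_sub, hsx, hcx]
    field_simp
    ring

lemma int_term (j : ℕ) : ∫ x in (0:ℝ)..Real.pi,
    (Real.sin ((2*j+1)*x) + Real.sin ((2*j+1)*x) * Real.cos x) = 2 / (2*j+1) := by
  have hd : ∀ x ∈ Set.uIcc 0 Real.pi, HasDerivAt (fun x : ℝ => -(Real.cos ((2*j+1)*x)) / (2*j+1)
      + (1/2) * (-(Real.cos ((2*j+2)*x)) / (2*j+2)) - (1/2) * (if j = 0 then 0 else (Real.cos (2*j*x)) / (2*j)))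
      (Real.sin ((2*j+1)*x) + Real.sin ((2*j+1)*x) * Real.cos x) x := by
    intro x _
    have hc (c : ℝ) (hc : c ≠ 0) : HasDerivAt (fun x : ℝ => Real.cos (c*x)/c) (-Real.sin (c*x)) x := by
      have h1 : HasDerivAt (fun x : ℝ => c * x) c x := by simpa using (hasDerivAt_id x).const_mul c
      have := h1.cos.div_const c
      refine this.congr_deriv ?_
      field_simp
    have h3 : HasDerivAt (fun x : ℝ => (if j = 0 then 0 else (Real.cos (2*j*x)) / (2*j)))
        (-Real.sin (2*j*x)) x := by
      rcases eq_or_ne j 0 with rfl | hj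
      · simpa using hasDerivAt_const x (0:ℝ)
      · simp only [hj, if_false]
        exact hc (2*j) (by positivity)
    have := (((hc (2*j+1) (by positivity)).neg).add
      ((hc (2*j+2) (by positivity)).neg.const_mul (1/2))).sub (h3.const_mul (1/2))
    refine (this.congr_deriv ?_).congr_of_eventuallyEq (Eventually.of_forall fun y => ?_)
    · rw [show (2*j+2 : ℝ)*x = (2*j+1)*x + x by ring, show (2*j : ℝ)*x = (2*j+1)*x - x by ring,
        Real.sin_add, Real.sin_sub]
      ring
    · simp [neg_div]
  rw [intervalIntegral.integral_eq_sub_of_hasDerivAt hd (Continuous.intervalIntegrable (by fun_prop) _ _)]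
  have a1 : Real.cos ((2*j+1)*Real.pi) = -1 := by
    rw [show (2*j+1 : ℝ)*Real.pi = Real.pi + j * (2*Real.pi) by ring, Real.cos_add_nat_mul_two_pi]
    simp
  have a2 : Real.cos ((2*j+2)*Real.pi) = 1 := by
    rw [show (2*j+2 : ℝ)*Real.pi = 0 + (j+1:ℕ) * (2*Real.pi) by push_cast; ring, Real.cos_add_nat_mul_two_pi]
    simp
  have a3 : Real.cos ((2*j)*Real.pi) = 1 := by
    rw [show (2*j : ℝ)*Real.pi = 0 + j * (2*Real.pi) by ring, Real.cos_add_nat_mul_two_pi]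
    simp
  simp only [a1, a2, a3, mul_zero, Real.cos_zero]
  ring

lemma sum_harm (m : ℕ) : ∑ j ∈ Finset.range m, (2:ℝ) / (2*j+1) =
    2 * (harmonic (2*m) : ℝ) - harmonic m := by
  induction m with
  | zero => simp
  | succ m ih =>
    rw [Finset.sum_range_succ, ih, show 2*(m+1) = 2*m+1+1 by ring, harmonic_succ, harmonic_succ,
      harmonic_succ]
    push_cast
    field_simp
    ring

lemma RL : Tendsto (fun m : ℕ => ∫ x in (0:ℝ)..Real.pi, Real.cos (2*m*x) * kk x) atTop (𝓝 0) := by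
  have h := Real.tendsto_integral_exp_smul_cocompact
    ((Set.Ioc 0 Real.pi).indicator (fun x => (kk x : ℂ)))
  have hw : Tendsto (fun m : ℕ => (m : ℝ) / Real.pi) atTop (cocompact ℝ) :=
    (tendsto_natCast_atTop_atTop.atTop_div_const Real.pi_pos).mono_right atTop_le_cocompact
  have h2 := (Complex.continuous_re.tendsto 0).comp (h.comp hw)
  simp only [Complex.zero_re] at h2
  refine h2.congr fun m => ?_
  simp only [Function.comp]
  have hk : MeasureTheory.IntegrableOn (fun x => (kk x : ℂ)) (Set.Ioc 0 Real.pi) := by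
    have := (intervalIntegrable_iff_integrableOn_Ioc_of_le Real.pi_pos.le).1 kk_int
    exact this.ofReal
  have hi := hk.integrable_indicator measurableSet_Ioc
  have hi2 := (Real.fourierIntegral_convergent_iff (f := (Set.Ioc 0 Real.pi).indicator
    (fun x => (kk x : ℂ))) ((m:ℝ)/Real.pi)).2 hi
  have hre := integral_re (𝕜 := ℂ) hi2
  simp only [RCLike.re_to_complex, RCLike.inner_apply, conj_trivial] at hre
  rw [intervalIntegral.integral_of_le Real.pi_pos.le, ← MeasureTheory.integral_indicator measurableSet_Ioc]
  simp_rw [mul_comm _ ((m:ℝ)/Real.pi)]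
  rw [← hre]
  congr 1
  ext x
  by_cases hx : x ∈ Set.Ioc 0 Real.pi
  · simp only [Set.indicator_of_mem hx, Circle.smul_def, Real.fourierChar_apply, smul_eq_mul]
    rw [Complex.re_mul_ofReal, Complex.exp_ofReal_mul_I_re]
    congr 1
    rw [← Real.cos_neg]
    congr 1
    have := Real.pi_pos
    field_simp
  · simp [Set.indicator_of_notMem hx]

lemma cin_seq (m : ℕ) (hm : 0 < m) : ∫ u in (0:ℝ)..(2*m*Real.pi), (1 - Real.cos u) / u =
    2 * (harmonic (2*m) : ℝ) - harmonic m + Real.log (Real.pi/2)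
      - ∫ x in (0:ℝ)..Real.pi, Real.cos (2*m*x) * kk x := by
  have hc : IntervalIntegrable (fun x => Real.cos (2*m*x) * kk x) MeasureTheory.volume 0 Real.pi :=
    kk_int.continuousOn_mul (by fun_prop)
  have hD (j : ℕ) : IntervalIntegrable (fun x => Real.sin ((2*j+1)*x) + Real.sin ((2*j+1)*x) * Real.cos x)
      MeasureTheory.volume 0 Real.pi := Continuous.intervalIntegrable (by fun_prop) _ _
  have e := intervalIntegral.mul_integral_comp_mul_left (a := 0) (b := Real.pi)
    (f := fun u : ℝ => (1 - Real.cos u) / u) (c := 2*m)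
  rw [mul_zero] at e
  rw [← e, ← intervalIntegral.integral_const_mul, ← sum_harm, ← kk_integral]
  simp_rw [← int_term]
  have hS : IntervalIntegrable (fun x => ∑ j ∈ Finset.range m,
      (Real.sin ((2*j+1)*x) + Real.sin ((2*j+1)*x) * Real.cos x)) MeasureTheory.volume 0 Real.pi :=
    Continuous.intervalIntegrable (by fun_prop) _ _
  rw [← intervalIntegral.integral_finsetSum (fun j _ => hD j),
    ← intervalIntegral.integral_add hS kk_int,
    ← intervalIntegral.integral_sub (hS.add kk_int) hc]
  apply intervalIntegral.integral_congr_ae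
  refine MeasureTheory.ae_of_all _ fun x hx => ?_
  rw [Set.uIoc_of_le Real.pi_pos.le] at hx
  have h0 := hx.1
  have hs : 0 < Real.sin (x/2) :=
    Real.sin_pos_of_pos_of_lt_pi (by linarith [hx.1]) (by linarith [Real.pi_pos, hx.2])
  have hmm : (0:ℝ) < m := by exact_mod_cast hm
  rw [← D_eq m x hs.ne']
  unfold kk
  field_simp
  ring

lemma cin_tendsto_seq : Tendsto (fun m : ℕ => (∫ u in (0:ℝ)..(2*m*Real.pi), (1 - Real.cos u) / u)
    - Real.log (2*m*Real.pi)) atTop (𝓝 Real.eulerMascheroniConstant) := by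
  have h1 := Real.tendsto_harmonic_sub_log
  have h2 := h1.comp (tendsto_id.const_mul_atTop' (r := 2) (by norm_num))
  have h := ((h2.const_mul 2).sub h1).sub RL
  rw [show 2 * Real.eulerMascheroniConstant - Real.eulerMascheroniConstant - 0 =
    Real.eulerMascheroniConstant by ring] at h
  refine h.congr' ?_
  filter_upwards [eventually_gt_atTop 0] with m hm
  have hmm : (0:ℝ) < m := by exact_mod_cast hm
  rw [cin_seq m hm]
  have := Real.pi_pos
  simp only [Function.comp, id]
  push_cast
  rw [Real.log_mul (x := 2*(m:ℝ)) (y := Real.pi) (by positivity) (by positivity),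
    Real.log_mul (x := 2) (y := (m:ℝ)) (by positivity) (by positivity),
    Real.log_div (by positivity) (by positivity)]
  ring

lemma cos_int (a b : ℝ) (ha : 0 < a) (hb : 0 < b) : ∫ u in a..b, Real.cos u / u =
    Real.log b - Real.log a - ((∫ u in (0:ℝ)..b, (1 - Real.cos u) / u) -
      ∫ u in (0:ℝ)..a, (1 - Real.cos u) / u) := by
  have hI := fun a b => cin_cont.intervalIntegrable (μ := MeasureTheory.volume) a b
  rw [intervalIntegral.integral_interval_sub_left (hI _ _) (hI _ _),
    ← Real.log_div hb.ne' ha.ne', ← integral_one_div_of_pos ha hb, ← intervalIntegral.integral_sub]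
  · congr 1; ext u; ring
  · apply intervalIntegral.intervalIntegrable_one_div
    · intro x hx
      have := lt_of_lt_of_le (lt_min ha hb) hx.1
      exact this.ne'
    · fun_prop
  · exact hI _ _

lemma cin_tendsto : Tendsto (fun T : ℝ => (∫ u in (0:ℝ)..T, (1 - Real.cos u) / u)
    - Real.log T) atTop (𝓝 Real.eulerMascheroniConstant) := by
  have hpi := Real.pi_pos
  have hfl : Tendsto (fun T : ℝ => ⌊T / (2*Real.pi)⌋₊) atTop atTop :=
    tendsto_nat_floor_atTop.comp (tendsto_id.atTop_div_const (by positivity))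
  have h := cin_tendsto_seq.comp hfl
  have hz : Tendsto (fun T : ℝ => ∫ u in (2*(⌊T / (2*Real.pi)⌋₊ : ℝ)*Real.pi)..T, Real.cos u / u)
      atTop (𝓝 0) := by
    have hb : Tendsto (fun T : ℝ => 1 / (⌊T / (2*Real.pi)⌋₊ : ℝ)) atTop (𝓝 0) :=
      tendsto_one_div_atTop_nhds_zero_nat.comp hfl
    refine squeeze_zero_norm' ?_ hb
    filter_upwards [hfl.eventually_gt_atTop 0, eventually_gt_atTop 0] with T hm hT
    have hle := Nat.floor_le (a := T / (2*Real.pi)) (by positivity)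
    have hlt := Nat.lt_floor_add_one (T / (2*Real.pi))
    set m := ⌊T / (2*Real.pi)⌋₊
    have hmm : (0:ℝ) < m := by exact_mod_cast hm
    rw [le_div_iff₀ (by positivity)] at hle
    rw [div_lt_iff₀ (by positivity)] at hlt
    have := intervalIntegral.norm_integral_le_of_norm_le_const (a := 2*(m:ℝ)*Real.pi) (b := T)
      (f := fun u => Real.cos u / u) (C := 1 / (2*m*Real.pi)) (by
        intro u hu
        rw [Set.uIoc_of_le (by linarith)] at hu
        have h0 : 0 < 2*(m:ℝ)*Real.pi := by positivity
        have hu0 : 0 < u := h0.trans hu.1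
        rw [norm_div, Real.norm_eq_abs, Real.norm_eq_abs, abs_of_pos hu0]
        exact div_le_div₀ zero_le_one (Real.abs_cos_le_one u) h0 hu.1.le)
    refine this.trans ?_
    rw [abs_of_nonneg (by linarith), div_mul_eq_mul_div, div_le_div_iff₀ (by positivity) hmm]
    nlinarith
  have h' := h.sub hz
  rw [sub_zero] at h'
  refine h'.congr' ?_
  filter_upwards [hfl.eventually_gt_atTop 0, eventually_gt_atTop 0] with T hm hT
  have hmm : (0:ℝ) < ⌊T / (2*Real.pi)⌋₊ := by exact_mod_cast hm
  rw [cos_int _ _ (by positivity) hT]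
  simp only [Function.comp]
  ring

theorem integral_formula_for_log_char_function (lam : ℝ) (hlam : 0 < lam) :
    ∃ L : ℝ,
      Tendsto (fun T : ℝ => ∫ u in lam..T, Real.cos u / u) atTop (𝓝 L) ∧
      (∫ v in (0:ℝ)..1, if v = 0 then Complex.I * lam
          else (Complex.exp (Complex.I * lam * v) - 1) / v) =
        ((-(Real.eulerMascheroniConstant + L + Real.log lam) : ℝ) : ℂ) +
          Complex.I * ((∫ u in (0:ℝ)..lam, Real.sin u / u : ℝ) : ℂ) := by
  refine ⟨-Real.eulerMascheroniConstant + (-Real.log lam + ∫ u in (0:ℝ)..lam, (1 - Real.cos u) / u), ?_, ?_⟩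
  · refine (cin_tendsto.neg.add_const _).congr' ?_
    filter_upwards [eventually_gt_atTop 0] with T hT
    rw [cos_int lam T hlam hT]
    ring
  · have hs : ∫ u in (0:ℝ)..lam, Real.sin u / u = ∫ u in (0:ℝ)..lam, Real.sinc u := by
      apply intervalIntegral.integral_congr_ae
      refine MeasureTheory.ae_of_all _ fun x hx => ?_
      rw [Set.uIoc_of_le hlam.le] at hx
      rw [Real.sinc_of_ne_zero hx.1.ne']
    have e1 := intervalIntegral.mul_integral_comp_mul_left (a := 0) (b := 1)
      (f := fun u : ℝ => (1 - Real.cos u) / u) (c := lam)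
    have e2 := intervalIntegral.mul_integral_comp_mul_left (a := 0) (b := 1)
      (f := Real.sinc) (c := lam)
    rw [mul_zero, mul_one] at e1 e2
    rw [hs, ← e1, ← e2, ← intervalIntegral.integral_const_mul, ← intervalIntegral.integral_const_mul]
    have hf : ∀ v : ℝ, (if v = 0 then Complex.I * lam
          else (Complex.exp (Complex.I * lam * v) - 1) / v) =
        -((lam * ((1 - Real.cos (lam * v)) / (lam * v)) : ℝ) : ℂ) +
          Complex.I * ((lam * Real.sinc (lam * v) : ℝ) : ℂ) := by
      intro v
      split_ifs with hv
      · simp [hv]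
      · rw [Real.sinc_of_ne_zero (by positivity)]
        have hv' : (v:ℂ) ≠ 0 := by exact_mod_cast hv
        have hl' : (lam:ℂ) ≠ 0 := by exact_mod_cast hlam.ne'
        rw [show Complex.I * lam * v = ((lam * v : ℝ) : ℂ) * Complex.I by push_cast; ring,
          Complex.exp_mul_I]
        push_cast
        field_simp
        ring
    simp_rw [hf]
    have c1 : Continuous fun v : ℝ => (lam * ((1 - Real.cos (lam * v)) / (lam * v)) : ℝ) :=
      (cin_cont.comp (continuous_const.mul continuous_id)).const_mul lam |> fun h => h
    have c2 : Continuous fun v : ℝ => (lam * Real.sinc (lam * v) : ℝ) := by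
      have := Real.continuous_sinc
      fun_prop
    rw [intervalIntegral.integral_add, intervalIntegral.integral_neg,
      intervalIntegral.integral_const_mul, intervalIntegral.integral_ofReal,
      intervalIntegral.integral_ofReal]
    · push_cast; ring
    · exact ((Complex.continuous_ofReal.comp c1).neg).intervalIntegrable _ _
    · exact ((Complex.continuous_ofReal.comp c2).const_mul _).intervalIntegrable _ _
end

section
/- One has lim_{x→0+} ( −∫_x^∞ (cos u)/u du − ln x ) = γ, where ∫_x^∞ (cos u)/u du denotes the convergent improper integral lim_{T→∞} ∫_x^T (cos u)/u du. -/
open Filter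
open scoped Topology

namespace CosInt

open MeasureTheory intervalIntegral

noncomputable def g (u : ℝ) : ℝ := Real.sin (u / 2) * Real.sinc (u / 2)

lemma g_cont : Continuous g := by
  unfold g
  have := Real.continuous_sinc
  fun_prop

lemma g_eq (u : ℝ) : g u = (1 - Real.cos u) / u := by
  unfold g
  rcases eq_or_ne u 0 with rfl | hu
  · simp
  · rw [Real.sinc_of_ne_zero (by positivity)]
    have h : Real.cos u = 1 - 2 * Real.sin (u / 2) ^ 2 := by
      have := Real.cos_two_mul (u / 2)
      rw [mul_div_cancel₀ u (two_ne_zero)] at this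
      rw [this, Real.cos_sq']; ring
    rw [h]
    field_simp
    ring

noncomputable def h (t : ℝ) : ℝ := 1 / Real.sin t - 1 / t

noncomputable def P (t : ℝ) : ℝ := Real.log (Real.sinc t) - Real.log (1 + Real.cos t)

lemma sin_pos' {t : ℝ} (ht : t ∈ Set.Ioo 0 (Real.pi / 2)) : 0 < Real.sin t :=
  Real.sin_pos_of_pos_of_lt_pi ht.1 (by linarith [ht.2, Real.pi_pos])

lemma P_cont : ContinuousOn P (Set.Icc 0 (Real.pi / 2)) := by
  intro t ht
  have hc : 0 ≤ Real.cos t := Real.cos_nonneg_of_mem_Icc ⟨by linarith [ht.1, Real.pi_pos], ht.2⟩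
  have hs : Real.sinc t ≠ 0 := by
    rcases eq_or_ne t 0 with rfl | h0
    · simp
    · rw [Real.sinc_of_ne_zero h0]
      have : 0 < t := lt_of_le_of_ne ht.1 h0.symm
      have := Real.sin_pos_of_pos_of_lt_pi this (by linarith [ht.2, Real.pi_pos])
      positivity
  apply ContinuousAt.continuousWithinAt
  unfold P
  apply ContinuousAt.sub
  · exact (Real.continuous_sinc.continuousAt).log hs
  · exact ContinuousAt.log (by fun_prop) (by positivity)

lemma P_deriv {t : ℝ} (ht : t ∈ Set.Ioo 0 (Real.pi / 2)) : HasDerivAt P (h t) t := by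
  have hs := sin_pos' ht
  have ht0 : 0 < t := ht.1
  have hc : 0 ≤ Real.cos t :=
    Real.cos_nonneg_of_mem_Icc ⟨by linarith [ht.1, Real.pi_pos], ht.2.le⟩
  have h1 : HasDerivAt (fun t => Real.log (Real.sin t) - Real.log t - Real.log (1 + Real.cos t))
      (Real.cos t / Real.sin t - 1 / t - (-Real.sin t) / (1 + Real.cos t)) t :=
    (((Real.hasDerivAt_sin t).log hs.ne').sub ((hasDerivAt_id t).log ht0.ne')).sub
      (((Real.hasDerivAt_cos t).const_add 1).log (by positivity))
  have h2 : Real.cos t / Real.sin t - 1 / t - (-Real.sin t) / (1 + Real.cos t) = h t := by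
    unfold h
    have : 1 + Real.cos t ≠ 0 := by positivity
    have h3 := Real.sin_sq_add_cos_sq t
    field_simp
    linear_combination t * h3
  rw [← h2]
  refine h1.congr_of_eventuallyEq ?_
  filter_upwards [isOpen_Ioo.mem_nhds ht] with s hs'
  have := (sin_pos' hs').ne'
  unfold P
  rw [Real.sinc_of_ne_zero hs'.1.ne', Real.log_div this hs'.1.ne']

lemma h_int : IntervalIntegrable h volume 0 (Real.pi / 2) := by
  have hp : (0:ℝ) ≤ Real.pi / 2 := by positivity
  apply intervalIntegrable_deriv_of_nonneg (g := P)
  · rw [Set.uIcc_of_le hp]; exact P_cont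
  · rw [min_eq_left hp, max_eq_right hp]; exact fun t ht => P_deriv ht
  · rw [min_eq_left hp, max_eq_right hp]
    intro t ht
    have := sin_pos' ht
    exact sub_nonneg.2 (one_div_le_one_div_of_le this (Real.sin_le ht.1.le))

lemma h_val : ∫ t in (0:ℝ)..(Real.pi / 2), h t = 2 * Real.log 2 - Real.log Real.pi := by
  rw [integral_eq_sub_of_hasDerivAt_of_le (by positivity) P_cont (fun t ht => P_deriv ht) h_int]
  have := Real.pi_pos
  unfold P
  rw [Real.sinc_of_ne_zero (by positivity)]
  simp only [Real.sin_pi_div_two, Real.cos_pi_div_two, Real.sinc_zero, Real.cos_zero]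
  norm_num
  rw [Real.log_div two_ne_zero this.ne']
  ring

lemma RL : Tendsto (fun n : ℕ => ∫ t in (0:ℝ)..(Real.pi / 2), Real.cos (2 * n * t) * h t)
    atTop (𝓝 0) := by
  have hp : (0:ℝ) ≤ Real.pi / 2 := by positivity
  have hpi := Real.pi_pos
  let f : ℝ → ℂ := Set.indicator (Set.Ioc 0 (Real.pi / 2)) (fun v => (h v : ℂ))
  have hf : Integrable f := by
    rw [integrable_indicator_iff measurableSet_Ioc]
    have := h_int
    rw [intervalIntegrable_iff_integrableOn_Ioc_of_le hp] at this
    exact this.ofReal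
  have h1 := Real.tendsto_integral_exp_smul_cocompact f
  have h2 : Tendsto (fun n : ℕ => (n : ℝ) / Real.pi) atTop (cocompact ℝ) := by
    refine Tendsto.mono_right ?_ atTop_le_cocompact
    exact (tendsto_natCast_atTop_atTop).atTop_div_const hpi
  have h3 := (Complex.continuous_re.tendsto _).comp (h1.comp h2)
  rw [Complex.zero_re] at h3
  refine h3.congr (fun n => ?_)
  simp only [Function.comp]
  have hi : Integrable (fun v : ℝ => Real.fourierChar (-(v * ((n:ℝ) / Real.pi))) • f v) := by
    have := (Real.fourierIntegral_convergent_iff (f := f) (μ := volume) ((n:ℝ) / Real.pi)).2 hf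
    simpa [mul_comm] using this
  have h4 := Complex.reCLM.integral_comp_comm hi
  simp only [Complex.reCLM_apply] at h4
  rw [← h4, intervalIntegral.integral_of_le hp, ← MeasureTheory.integral_indicator measurableSet_Ioc]
  congr 1
  ext v
  by_cases hv : v ∈ Set.Ioc 0 (Real.pi / 2)
  · simp only [f, Set.indicator_of_mem hv]
    rw [Circle.smul_def, Real.fourierChar_apply, smul_eq_mul, Complex.re_mul_ofReal,
      Complex.exp_ofReal_mul_I_re]
    congr 1
    rw [← Real.cos_neg]
    congr 1
    field_simp
  · simp [f, Set.indicator_of_notMem hv]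

lemma dirichlet (n : ℕ) (t : ℝ) :
    1 - Real.cos (2 * n * t) = Real.sin t * ∑ k ∈ Finset.range n, 2 * Real.sin ((2 * k + 1) * t) := by
  induction n with
  | zero => simp
  | succ n ih =>
    rw [Finset.sum_range_succ, mul_add, ← ih]
    have e1 : 2 * ((n + 1 : ℕ) : ℝ) * t = (2 * n + 1) * t + t := by push_cast; ring
    have e2 : 2 * (n : ℝ) * t = (2 * n + 1) * t - t := by ring
    rw [e1, e2, Real.cos_add, Real.cos_sub]
    ring

lemma sin_int (k : ℕ) : ∫ t in (0:ℝ)..(Real.pi / 2), 2 * Real.sin ((2 * k + 1) * t)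
    = 2 / (2 * k + 1) := by
  have hk : (2 * (k:ℝ) + 1) ≠ 0 := by positivity
  rw [intervalIntegral.integral_const_mul, intervalIntegral.integral_comp_mul_left _ hk,
    integral_sin]
  have : Real.cos ((2 * k + 1) * (Real.pi / 2)) = 0 := by
    rw [Real.cos_eq_zero_iff]
    exact ⟨k, by push_cast; ring⟩
  rw [this]
  simp
  field_simp

lemma odd_sum (n : ℕ) : ∑ k ∈ Finset.range n, (2 : ℝ) / (2 * k + 1)
    = 2 * (harmonic (2 * n) : ℝ) - harmonic n := by
  induction n with
  | zero => simp
  | succ n ih =>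
    rw [Finset.sum_range_succ, ih, show 2 * (n + 1) = 2 * n + 1 + 1 by ring, harmonic_succ,
      harmonic_succ, harmonic_succ]
    push_cast
    field_simp
    ring

lemma key (n : ℕ) : ∫ u in (0:ℝ)..(n * Real.pi), g u =
    (2 * (harmonic (2 * n) : ℝ) - harmonic n) - (2 * Real.log 2 - Real.log Real.pi)
      + ∫ t in (0:ℝ)..(Real.pi / 2), Real.cos (2 * n * t) * h t := by
  have hp : (0:ℝ) ≤ Real.pi / 2 := by positivity
  have hc : IntervalIntegrable (fun t => Real.cos (2 * n * t) * h t) volume 0 (Real.pi / 2) :=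
    h_int.continuousOn_mul (by fun_prop)
  have h1 := intervalIntegral.mul_integral_comp_mul_left (a := 0) (b := Real.pi / 2) (f := g) (2 * n)
  rw [mul_zero, show 2 * (n:ℝ) * (Real.pi / 2) = n * Real.pi by ring] at h1
  rw [← h1, ← intervalIntegral.integral_const_mul, ← odd_sum, ← h_val]
  simp_rw [← sin_int]
  rw [← intervalIntegral.integral_finsetSum
    (fun i _ => Continuous.intervalIntegrable (by fun_prop) _ _)]
  rw [← intervalIntegral.integral_sub _ h_int, ← intervalIntegral.integral_add _ hc]
  · apply integral_congr_Ioo_of_le hp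
    intro t ht
    have hs := (sin_pos' ht).ne'
    have ht0 := ht.1.ne'
    have hd := dirichlet n t
    simp only
    set S := ∑ k ∈ Finset.range n, 2 * Real.sin ((2 * k + 1) * t) with hS
    have e : S = (1 - Real.cos (2 * n * t)) / Real.sin t := by rw [hd]; field_simp
    rw [g_eq, e]
    unfold h
    rcases Nat.eq_zero_or_pos n with rfl | hn
    · simp
    · have : (n:ℝ) ≠ 0 := by positivity
      field_simp
      ring
  · exact (Continuous.intervalIntegrable (by fun_prop) _ _).sub h_int
  · exact Continuous.intervalIntegrable (by fun_prop) _ _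

lemma lim1 : Tendsto (fun n : ℕ => (∫ u in (0:ℝ)..(n * Real.pi), g u) - Real.log (n * Real.pi))
    atTop (𝓝 Real.eulerMascheroniConstant) := by
  have hH := Real.tendsto_harmonic_sub_log
  have h2 : Tendsto (fun n : ℕ => 2 * n) atTop atTop :=
    tendsto_id.const_mul_atTop' (by norm_num)
  have := (((hH.comp h2).const_mul 2).sub hH).add RL
  rw [show 2 * Real.eulerMascheroniConstant - Real.eulerMascheroniConstant + 0
    = Real.eulerMascheroniConstant by ring] at this
  refine this.congr' ?_
  filter_upwards [eventually_gt_atTop 0] with n hn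
  have hn' : (n:ℝ) ≠ 0 := by positivity
  rw [key, Real.log_mul hn' Real.pi_ne_zero]
  simp only [Function.comp]
  push_cast
  rw [Real.log_mul two_ne_zero hn']
  ring

lemma cos_ii {a b : ℝ} (ha : 0 < a) (hb : 0 < b) :
    IntervalIntegrable (fun u => Real.cos u / u) volume a b := by
  apply ContinuousOn.intervalIntegrable
  apply ContinuousOn.div (by fun_prop) (by fun_prop)
  intro x hx
  exact (lt_of_lt_of_le (lt_min ha hb) hx.1).ne'

lemma g_int {a b : ℝ} (ha : 0 < a) (hb : 0 < b) :
    ∫ u in a..b, g u = Real.log b - Real.log a - ∫ u in a..b, Real.cos u / u := by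
  rw [← Real.log_div hb.ne' ha.ne', ← integral_one_div_of_pos ha hb,
    ← intervalIntegral.integral_sub _ (cos_ii ha hb)]
  · congr 1; ext u; rw [g_eq, sub_div]
  · apply ContinuousOn.intervalIntegrable
    apply ContinuousOn.div (by fun_prop) (by fun_prop)
    intro x hx
    exact (lt_of_lt_of_le (lt_min ha hb) hx.1).ne'

lemma conv : ∃ L : ℝ, Tendsto (fun T : ℝ => ∫ u in (1:ℝ)..T, Real.cos u / u) atTop (𝓝 L) := by
  have hi : IntegrableOn (fun u : ℝ => -(u ^ 2)⁻¹ * Real.sin u) (Set.Ioi 1) := by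
    have h1 := integrableOn_Ioi_rpow_of_lt (show (-2:ℝ) < -1 by norm_num) one_pos
    refine Integrable.mono' h1 ?_ ?_
    · apply Measurable.aestronglyMeasurable; fun_prop
    · filter_upwards [ae_restrict_mem measurableSet_Ioi] with u hu
      have hu0 : (0:ℝ) < u := lt_trans one_pos hu
      rw [Real.rpow_neg hu0.le, norm_mul, norm_neg, Real.rpow_two,
        Real.norm_of_nonneg (by positivity)]
      exact mul_le_of_le_one_right (by positivity) (Real.abs_sin_le_one u)
  have h2 := intervalIntegral_tendsto_integral_Ioi 1 hi tendsto_id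
  have h3 : Tendsto (fun T : ℝ => T⁻¹ * Real.sin T) atTop (𝓝 0) := by
    refine squeeze_zero_norm' ?_ tendsto_inv_atTop_zero
    filter_upwards [eventually_gt_atTop 0] with T hT
    rw [norm_mul, Real.norm_of_nonneg (by positivity)]
    exact mul_le_of_le_one_right (by positivity) (Real.abs_sin_le_one T)
  refine ⟨_, ((h3.sub_const ((1:ℝ)⁻¹ * Real.sin 1)).sub h2).congr' ?_⟩
  filter_upwards [eventually_ge_atTop 1] with T hT
  have hne : ∀ x ∈ Set.uIcc 1 T, x ≠ 0 := by
    intro x hx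
    rw [Set.uIcc_of_le hT] at hx
    exact (lt_of_lt_of_le one_pos hx.1).ne'
  simp only [id]
  rw [← intervalIntegral.integral_mul_deriv_eq_deriv_mul (u := fun x => x⁻¹) (v := Real.sin)
    (v' := Real.cos) (u' := fun x => -(x ^ 2)⁻¹) (fun x hx => hasDerivAt_inv (hne x hx))
    (fun x _ => Real.hasDerivAt_sin x)]
  · congr 1; ext u; rw [div_eq_inv_mul]
  · apply ContinuousOn.intervalIntegrable
    apply ContinuousOn.neg
    apply ContinuousOn.inv₀ (by fun_prop)
    intro x hx
    exact pow_ne_zero _ (hne x hx)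
  · exact Real.continuous_cos.intervalIntegrable _ _

lemma g_ii (a b : ℝ) : IntervalIntegrable g volume a b := g_cont.intervalIntegrable a b

lemma const_eq {L : ℝ} (hL : Tendsto (fun T : ℝ => ∫ u in (1:ℝ)..T, Real.cos u / u) atTop (𝓝 L)) :
    (∫ u in (0:ℝ)..1, g u) - L = Real.eulerMascheroniConstant := by
  have hT : Tendsto (fun n : ℕ => (n : ℝ) * Real.pi) atTop atTop :=
    tendsto_natCast_atTop_atTop.atTop_mul_const Real.pi_pos
  refine tendsto_nhds_unique ((hL.comp hT).const_sub _) (lim1.congr' ?_)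
  filter_upwards [eventually_gt_atTop 0] with n hn
  have hp := Real.pi_pos
  have : 0 < (n:ℝ) * Real.pi := by positivity
  rw [← intervalIntegral.integral_add_adjacent_intervals (g_ii 0 1) (g_ii 1 _), g_int one_pos this]
  simp only [Function.comp, Real.log_one]
  ring

end CosInt

open CosInt in
/-- `lim_{x→0+} ( -∫_x^∞ cos u/u du - ln x ) = γ`, where `∫_x^∞ cos u/u du` denotes the
convergent improper integral `lim_{T→∞} ∫_x^T cos u/u du`. -/
theorem cosine_integral_limit_euler_mascheroni :
    ∃ F : ℝ → ℝ,
      (∀ x : ℝ, 0 < x →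
        Tendsto (fun T : ℝ => ∫ u in x..T, Real.cos u / u) atTop (𝓝 (F x))) ∧
      Tendsto (fun x : ℝ => -F x - Real.log x) (nhdsWithin 0 (Set.Ioi 0))
        (𝓝 Real.eulerMascheroniConstant) := by
  obtain ⟨L, hL⟩ := conv
  refine ⟨fun x => (∫ u in x..1, Real.cos u / u) + L, fun x hx => ?_, ?_⟩
  · refine (hL.const_add _).congr' ?_
    filter_upwards [eventually_gt_atTop 0] with T hT
    exact intervalIntegral.integral_add_adjacent_intervals (cos_ii hx one_pos) (cos_ii one_pos hT)
  · rw [← const_eq hL]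
    have h1 : Continuous fun x : ℝ => ∫ u in (1:ℝ)..x, g u :=
      intervalIntegral.continuous_primitive g_ii 1
    have h2 := ((h1.tendsto 0).mono_left (nhdsWithin_le_nhds (s := Set.Ioi 0))).neg.sub_const L
    rw [← intervalIntegral.integral_symm] at h2
    refine h2.congr' ?_
    filter_upwards [self_mem_nhdsWithin] with x hx
    rw [← intervalIntegral.integral_symm, g_int hx one_pos, Real.log_one]
    ring
end
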